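/- arXiv:1708.06054 — 2 statements merged into one kernel-verified Lean document; each statement's English description precedes it below -/
import Mathlib

section
/- The Fermat cubic fourfold X: x₁³+⋯+x₆³ = 0 over the algebraic closure of F₂ contains exactly 891 linear planes, and every one of them is defined over F₄. -/
open scoped BigOperators

/-- A plane contained in the Fermat cubic fourfold `x₁³+⋯+x₆³ = 0 ⊂ P⁵`. -/
def IsFermatPlane (K : Type*) [Field K] (P : Submodule K (Fin 6 → K)) : Prop :=
  Module.finrank K ↥P = 3 ∧ ∀ x ∈ P, ∑ i, x i ^ 3 = 0

/-!
For `q = |E|`, the Fermat form of degree `q + 1` is the diagonal of the Hermitian form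
`∑ i, x i ^ q * y i`. Polarizing with a scalar moved by the `q`-Frobenius shows that the form
vanishes identically on every linear subspace of the Fermat hypersurface, so the subspaces of half
the dimension are exactly the Lagrangians `P = Pᗮ`. Applying `x ↦ x ^ q` to the equation
`∑ i, x i ^ q * z i = 0` shows that the `q ^ 2`-Frobenius maps `P` into `Pᗮ = P`, and a subspace
stable under the `q ^ 2`-Frobenius is spanned by its points over the field with `q ^ 2` elements:
normalize a vector to have a coordinate `1` and subtract it from its Frobenius twist to shrink its
support.

It remains to count Lagrangians of a Hermitian space of dimension `2 * n` over the field with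
`q ^ 2` elements. Counting pairs `x ∈ P` of an isotropic vector and a Lagrangian, by induction on
the codimension in `P` of a fixed totally isotropic subspace, gives
`∏ i < n, (q ^ (2 * i + 1) + 1)`, which is `3 * 9 * 33 = 891` for `q = 2` and `n = 3`.
-/

open Module (Basis finrank finrank_pi finrank_eq_card_basis)

theorem ncard_mul_eq_ncard_mul {α β : Type*} [Finite α] [Finite β] (r : α → β → Prop)
    {s : Set α} {t : Set β} {m n : ℕ} (hm : ∀ a ∈ s, {b ∈ t | r a b}.ncard = m)
    (hn : ∀ b ∈ t, {a ∈ s | r a b}.ncard = n) : s.ncard * m = t.ncard * n := by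
  classical
  have := Fintype.ofFinite α
  have := Fintype.ofFinite β
  rw [Set.ncard_eq_toFinset_card', Set.ncard_eq_toFinset_card']
  refine Finset.card_mul_eq_card_mul r (fun a ha => ?_) fun b hb => ?_
  · rw [← hm a (Set.mem_toFinset.1 ha), Set.ncard_eq_toFinset_card']
    exact congrArg _ (by ext; simp [Finset.mem_bipartiteAbove])
  · rw [← hn b (Set.mem_toFinset.1 hb), Set.ncard_eq_toFinset_card']
    exact congrArg _ (by ext; simp [Finset.mem_bipartiteBelow])

/-- The Frobenius endomorphism `x ↦ x ^ |E|` of an algebra over a finite field `E`, as a ring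
homomorphism so that it can twist a sesquilinear form. -/
def cardFrobenius (E K : Type*) [Field E] [Fintype E] [CommRing K] [Algebra E K] : K →+* K :=
  FiniteField.frobeniusAlgHom E K

section Frobenius

theorem cardFrobenius_apply (E : Type*) {K : Type*} [Field E] [Fintype E] [CommRing K]
    [Algebra E K] (x : K) : cardFrobenius E K x = x ^ Fintype.card E :=
  rfl

theorem mem_range_algebraMap_iff_cardFrobenius_eq (E : Type*) {K : Type*} [Field E] [Fintype E]
    [Field K] [Algebra E K] {x : K} :
    x ∈ Set.range (algebraMap E K) ↔ cardFrobenius E K x = x := by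
  rw [cardFrobenius_apply]
  constructor
  · rintro ⟨a, rfl⟩
    rw [← map_pow, FiniteField.pow_card]
  · intro hx
    have hsplits := Polynomial.splits_X_pow_nat_card_sub_X (K := E)
    rw [Nat.card_eq_fintype_card] at hsplits
    refine hsplits.mem_range_of_isRoot
      (FiniteField.X_pow_card_sub_X_ne_zero E Fintype.one_lt_card) ?_
    simp [hx]

variable {E F : Type*} [Field E] [Fintype E] [Field F] [Algebra E F]
  [Algebra.IsQuadraticExtension E F]

theorem algebraMap_norm_eq_mul_cardFrobenius (a : F) :
    algebraMap E F (Algebra.norm E a) = cardFrobenius E F a * a := by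
  have : Finite F := Module.finite_of_finite E
  rw [FiniteField.algebraMap_norm_eq_pow_sum, Algebra.IsQuadraticExtension.finrank_eq_two,
    cardFrobenius_apply, ← pow_succ, Nat.card_eq_fintype_card]
  simp [Finset.sum_range_succ, add_comm]

theorem algebraMap_trace_eq_add_cardFrobenius (a : F) :
    algebraMap E F (Algebra.trace E F a) = cardFrobenius E F a + a := by
  have : Finite F := Module.finite_of_finite E
  rw [FiniteField.algebraMap_trace_eq_sum_pow, Algebra.IsQuadraticExtension.finrank_eq_two,
    cardFrobenius_apply, Nat.card_eq_fintype_card]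
  simp [Finset.sum_range_succ, add_comm]

theorem natCard_eq_sq_of_isQuadraticExtension : Nat.card F = Fintype.card E ^ 2 := by
  rw [Module.natCard_eq_pow_finrank (K := E), Algebra.IsQuadraticExtension.finrank_eq_two,
    Nat.card_eq_fintype_card]

theorem cardFrobenius_cardFrobenius_of_isQuadraticExtension (a : F) :
    cardFrobenius E F (cardFrobenius E F a) = a := by
  have : Finite F := Module.finite_of_finite E
  have := Fintype.ofFinite F
  rw [cardFrobenius_apply, cardFrobenius_apply, ← pow_mul, ← sq,
    ← natCard_eq_sq_of_isQuadraticExtension (F := F), Nat.card_eq_fintype_card,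
    FiniteField.pow_card]

theorem ncard_trace_eq (e : E) :
    {a : F | Algebra.trace E F a = e}.ncard = Fintype.card E := by
  classical
  have : Finite F := Module.finite_of_finite E
  have := Fintype.ofFinite F
  have hfiber : ∀ e', {a : F | Algebra.trace E F a = e'}.ncard =
      {a : F | Algebra.trace E F a = e}.ncard := by
    intro e'
    have hsurj := Algebra.trace_surjective E F
    simpa [Set.ncard_eq_toFinset_card'] using
      AddMonoidHom.card_fiber_eq_of_mem_range (Algebra.trace E F) (hsurj e') (hsurj e)
  have := ncard_mul_eq_ncard_mul (s := (Set.univ : Set F)) (t := (Set.univ : Set E)) (m := 1)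
    (fun a e => Algebra.trace E F a = e) (by simp) (fun e' _ => by simpa using hfiber e')
  rw [Set.ncard_univ, Set.ncard_univ, mul_one, natCard_eq_sq_of_isQuadraticExtension (E := E),
    Nat.card_eq_fintype_card, sq] at this
  exact (Nat.eq_of_mul_eq_mul_left Fintype.card_pos this).symm

end Frobenius

section Orthogonal

variable {K V : Type*} [Field K] [AddCommGroup V] [Module K V] [FiniteDimensional K V]
  {σ : K →+* K} {B : V →ₛₗ[σ] V →ₗ[K] K}

theorem finrank_add_finrank_orthogonalBilin_of_linearIndependent {ι : Type*} [Finite ι]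
    {U : Submodule K V} (b : Basis ι K U) (hb : LinearIndependent K fun i => B (b i)) :
    finrank K U + finrank K (U.orthogonalBilin B) = finrank K V := by
  have := Fintype.ofFinite ι
  have horth : U.orthogonalBilin B =
      (Submodule.span K (Set.range fun i => B (b i))).dualCoannihilator := by
    ext y
    rw [← SetLike.mem_coe (p := Submodule.dualCoannihilator _),
      Submodule.coe_dualCoannihilator_span]
    simp only [Submodule.mem_orthogonalBilin_iff, Set.mem_ofPred_eq, Set.forall_mem_range]
    refine ⟨fun h i => h _ (b i).2, fun h x hx => ?_⟩
    lift x to U using hx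
    rw [← b.sum_repr x]
    simp [h, -Basis.sum_repr]
  rw [horth, ← Subspace.finrank_add_finrank_dualCoannihilator_eq
    (Submodule.span K (Set.range fun i => B (b i))), finrank_span_eq_card hb,
    finrank_eq_card_basis b]

theorem finrank_add_finrank_orthogonalBilin (hB : B.SeparatingLeft)
    (hσ : Function.Surjective σ) (U : Submodule K V) :
    finrank K U + finrank K (U.orthogonalBilin B) = finrank K V := by
  have b := Module.finBasis K U
  exact finrank_add_finrank_orthogonalBilin_of_linearIndependent b <|
    (b.linearIndependent.map' U.subtype U.ker_subtype).map_of_surjective_injective σ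
      B.toAddMonoidHom hσ (fun x hx => hB x (LinearMap.congr_fun hx)) (map_smulₛₗ B)

end Orthogonal

section TotallyIsotropic

variable {K V : Type*} [Field K] [AddCommGroup V] [Module K V] {σ : K →+* K}
  {B : V →ₛₗ[σ] V →ₗ[K] K}

/-- A subspace on which the sesquilinear form `B` vanishes identically, expressed as containment in
its orthogonal. -/
def IsTotallyIsotropic (B : V →ₛₗ[σ] V →ₗ[K] K) (U : Submodule K V) : Prop :=
  U ≤ U.orthogonalBilin B

/-- A Lagrangian subspace: totally isotropic and of half the dimension of the ambient space. -/
structure IsLagrangian (B : V →ₛₗ[σ] V →ₗ[K] K) (P : Submodule K V) : Prop where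
  isTotallyIsotropic : IsTotallyIsotropic B P
  two_mul_finrank : 2 * finrank K P = finrank K V

/-- The vectors on which `x ↦ B x x` vanishes, including `0`; their count drives the count of
Lagrangians. -/
def isotropicVectors (B : V →ₛₗ[σ] V →ₗ[K] K) : Set V :=
  {x | B x x = 0}

theorem orthogonalBilin_sup_span_singleton (U : Submodule K V) (x : V) :
    (U ⊔ Submodule.span K {x}).orthogonalBilin B =
      U.orthogonalBilin B ⊓ LinearMap.ker (B x) := by
  refine le_antisymm (fun y hy => ⟨Submodule.orthogonalBilin_le le_sup_left hy,
    hy x (Submodule.mem_sup_right (Submodule.mem_span_singleton_self x))⟩) ?_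
  rintro y ⟨hyU, hyx⟩ z hz
  obtain ⟨u, hu, w, hw, rfl⟩ := Submodule.mem_sup.1 hz
  obtain ⟨c, rfl⟩ := Submodule.mem_span_singleton.1 hw
  rw [map_add, map_smulₛₗ, LinearMap.add_apply, LinearMap.smul_apply, hyU u hu,
    LinearMap.mem_ker.1 hyx, smul_zero, add_zero]

theorem IsTotallyIsotropic.sup_span_singleton {U : Submodule K V} (hU : IsTotallyIsotropic B U)
    (hB : B.IsSymm) {x : V} (hxU : x ∈ U.orthogonalBilin B) (hx : B x x = 0) :
    IsTotallyIsotropic B (U ⊔ Submodule.span K {x}) := by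
  rw [IsTotallyIsotropic, orthogonalBilin_sup_span_singleton, sup_le_iff, le_inf_iff,
    Submodule.span_singleton_le_iff_mem]
  exact ⟨⟨hU, fun u hu => hB.isRefl.eq_zero (hxU u hu)⟩, hxU, hx⟩

theorem IsTotallyIsotropic.isotropicVectors_inter_orthogonalBilin_sdiff {U P : Submodule K V}
    (hP : IsTotallyIsotropic B P) (hUP : U ≤ P) :
    {x ∈ (isotropicVectors B ∩ U.orthogonalBilin B) \ U | x ∈ P} = (P : Set V) \ U := by
  ext x
  refine ⟨fun ⟨hx, hxP⟩ => ⟨hxP, hx.2⟩, fun ⟨hxP, hxU⟩ => ⟨⟨⟨?_, ?_⟩, hxU⟩, hxP⟩⟩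
  · exact hP hxP x hxP
  · exact fun u hu => hP hxP u (hUP hu)

theorem isTotallyIsotropic_iff_forall_apply_self (hσ : ∃ t, σ t ≠ t) {P : Submodule K V} :
    IsTotallyIsotropic B P ↔ ∀ x ∈ P, B x x = 0 := by
  refine ⟨fun hP x hx => hP hx x hx, fun hP y hy x hx => ?_⟩
  obtain ⟨t, ht⟩ := hσ
  have hpolar {y : V} (hy : y ∈ P) : B x y + B y x = 0 := by
    simpa [hP x hx, hP y hy, add_comm] using hP (x + y) (add_mem hx hy)
  have hadd := hpolar hy
  have hsmul := hpolar (P.smul_mem t hy)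
  simp only [map_smulₛₗ, LinearMap.smul_apply, smul_eq_mul, RingHom.id_apply] at hsmul
  have : (t - σ t) * B x y = 0 := by linear_combination hsmul - σ t * hadd
  exact (mul_eq_zero.1 this).resolve_left (sub_ne_zero.2 ht.symm)

end TotallyIsotropic

section Hermitian

variable {E F V : Type*} [Field E] [Fintype E] [Field F] [Algebra E F]
  [AddCommGroup V] [Module F V] {B : V →ₛₗ[cardFrobenius E F] V →ₗ[F] F}

local notation "q" => Fintype.card E

theorem exists_algebraMap_eq_apply_self (hB : B.IsSymm) (x : V) :
    ∃ e : E, algebraMap E F e = B x x :=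
  (mem_range_algebraMap_iff_cardFrobenius_eq E).2 (hB.eq x x)

variable [Algebra.IsQuadraticExtension E F]

variable (E) in
theorem ncard_coe_submodule [Module.Finite F V] (W : Submodule F V) :
    (W : Set V).ncard = q ^ (2 * finrank F W) := by
  rw [← Nat.card_coe_set_eq, pow_mul, ← natCard_eq_sq_of_isQuadraticExtension (F := F)]
  exact Module.natCard_eq_pow_finrank (V := W)

theorem finrank_add_finrank_orthogonalBilin_of_isQuadraticExtension [Module.Finite F V]
    (hsep : B.SeparatingLeft) (U : Submodule F V) :
    finrank F U + finrank F (U.orthogonalBilin B) = finrank F V :=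
  finrank_add_finrank_orthogonalBilin hsep
    (fun a => ⟨_, cardFrobenius_cardFrobenius_of_isQuadraticExtension a⟩) U

theorem exists_isotropic_notMem_of_notMem (hB : B.IsSymm) (U : Submodule F V) {y z : V}
    (hy : y ∈ U.orthogonalBilin B) (hyy : B y y ≠ 0) (hz : z ∈ U.orthogonalBilin B) (hzU : z ∉ U)
    (hyz : B y z = 0) :
    ∃ x ∈ U.orthogonalBilin B, x ∉ U ∧ B x x = 0 := by
  have : Finite F := Module.finite_of_finite E
  have hzy : B z y = 0 := hB.isRefl.eq_zero hyz
  obtain ⟨ey, hey⟩ := exists_algebraMap_eq_apply_self hB y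
  obtain ⟨ez, hez⟩ := exists_algebraMap_eq_apply_self hB z
  obtain ⟨a, ha⟩ := FiniteField.norm_surjective E F (-ez / ey)
  have hnorm : cardFrobenius E F a * a * B y y = - B z z := by
    rw [← algebraMap_norm_eq_mul_cardFrobenius, ha, map_div₀, map_neg, hey, hez,
      div_mul_cancel₀ _ hyy]
  refine ⟨z + a • y, add_mem hz (Submodule.smul_mem _ a hy), fun hxU => ?_, ?_⟩
  · have hxy := hy _ hxU
    have ha0 : a = 0 := by simpa [hzy, hyy] using hxy
    exact hzU (by simpa [ha0] using hxU)
  · simp only [map_add, map_smulₛₗ, LinearMap.add_apply, LinearMap.smul_apply, hyz, hzy,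
      smul_eq_mul, RingHom.id_apply]
    linear_combination hnorm

theorem exists_isotropic_mem_orthogonalBilin_notMem [Module.Finite F V] (hB : B.IsSymm)
    (hsep : B.SeparatingLeft) {U : Submodule F V} (hdim : 2 * finrank F U + 2 ≤ finrank F V) :
    ∃ x ∈ U.orthogonalBilin B, x ∉ U ∧ B x x = 0 := by
  have horth := finrank_add_finrank_orthogonalBilin_of_isQuadraticExtension hsep
  have hnle : ¬ U.orthogonalBilin B ≤ U := fun hle => by
    have := Submodule.finrank_mono hle
    have := horth U
    lia
  obtain ⟨y, hy, hyU⟩ := SetLike.not_le_iff_exists.1 hnle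
  by_cases hyy : B y y = 0
  · exact ⟨y, hy, hyU, hyy⟩
  have hnle_sup : ¬ (U ⊔ Submodule.span F {y}).orthogonalBilin B ≤ U := fun hle => by
    have := Submodule.finrank_mono hle
    have := horth (U ⊔ Submodule.span F {y})
    have := Submodule.finrank_sup_span_singleton hyU
    lia
  obtain ⟨z, hz, hzU⟩ := SetLike.not_le_iff_exists.1 hnle_sup
  rw [orthogonalBilin_sup_span_singleton] at hz
  exact exists_isotropic_notMem_of_notMem hB U hy hyy hz.1 hzU hz.2

theorem ncard_add_smul_mem_isotropicVectors (hB : B.IsSymm) {x y : V} (hx : B x x = 0)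
    (hxy : B x y ≠ 0) :
    {a : F | y + a • x ∈ isotropicVectors B}.ncard = q := by
  have hyx : B y x ≠ 0 := fun h => hxy (hB.isRefl.eq_zero h)
  obtain ⟨e, he⟩ := exists_algebraMap_eq_apply_self hB y
  have hself (a : F) : B (y + a • x) (y + a • x) =
      algebraMap E F (e + Algebra.trace E F (a * B y x)) := by
    rw [map_add (algebraMap E F), he, algebraMap_trace_eq_add_cardFrobenius, map_mul, hB.eq]
    simp only [map_add, map_smulₛₗ, LinearMap.add_apply, LinearMap.smul_apply, hx, smul_eq_mul,
      RingHom.id_apply]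
    ring
  have hset : (· * B y x) '' {a : F | y + a • x ∈ isotropicVectors B} =
      {b : F | Algebra.trace E F b = -e} := by
    ext b
    simp only [isotropicVectors, Set.mem_image, Set.mem_ofPred_eq, hself, map_eq_zero]
    refine ⟨?_, fun hb => ⟨b / B y x, ?_⟩⟩
    · rintro ⟨a, ha, rfl⟩
      exact (neg_eq_of_add_eq_zero_right ha).symm
    · simp [div_mul_cancel₀ b hyx, hb]
  rw [← ncard_trace_eq (F := F) (-e), ← hset,
    Set.ncard_image_of_injective _ (mul_left_injective₀ hyx)]

theorem ncard_isotropicVectors_inter_sdiff_ker_mul_card [Finite V] (hB : B.IsSymm) {x : V}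
    (hx : B x x = 0) {W : Submodule F V} (hxW : x ∈ W) :
    (isotropicVectors B ∩ (W \ LinearMap.ker (B x) : Set V)).ncard * q =
      (W \ LinearMap.ker (B x) : Set V).ncard := by
  have : Finite F := Module.finite_of_finite E
  have hcount := ncard_mul_eq_ncard_mul (s := (W \ LinearMap.ker (B x) : Set V))
    (t := (Set.univ : Set F)) (fun y a => y + a • x ∈ isotropicVectors B)
    (m := q) (n := (isotropicVectors B ∩ (W \ LinearMap.ker (B x) : Set V)).ncard)
    (fun y hy => by simpa using ncard_add_smul_mem_isotropicVectors hB hx hy.2) fun a _ => by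
      rw [← Set.ncard_image_of_injective _ (add_left_injective (a • x))]
      congr 1
      ext z
      constructor
      · rintro ⟨y, ⟨⟨hyW, hxy⟩, hy⟩, rfl⟩
        exact ⟨hy, add_mem hyW (W.smul_mem a hxW), by simpa [hx] using hxy⟩
      · rintro ⟨hz, hzW, hxz⟩
        refine ⟨z - a • x, ⟨⟨sub_mem hzW (W.smul_mem a hxW), ?_⟩, ?_⟩, sub_add_cancel z _⟩
        · simpa [hx] using hxz
        · simpa using hz
  rw [Set.ncard_univ, natCard_eq_sq_of_isQuadraticExtension (E := E), sq, mul_comm, mul_assoc]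
    at hcount
  rw [Nat.eq_of_mul_eq_mul_left Fintype.card_pos hcount, mul_comm]

variable [Finite V]

-- The count `q ^ (2 * u) * (q ^ (4 * d - 1) + q ^ (2 * d) - q ^ (2 * d - 1))` with `u = dim U`,
-- multiplied by `q` and rearranged so that no subtraction occurs.
theorem IsTotallyIsotropic.ncard_isotropicVectors_inter_orthogonalBilin (hB : B.IsSymm)
    (hsep : B.SeparatingLeft) (d : ℕ) {U : Submodule F V} (hU : IsTotallyIsotropic B U)
    (hdim : 2 * (finrank F U + d) = finrank F V) :
    (isotropicVectors B ∩ U.orthogonalBilin B).ncard * q + q ^ (2 * (finrank F U + d)) =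
      q ^ (2 * finrank F U + 4 * d) + q ^ (2 * (finrank F U + d) + 1) := by
  have hperp := finrank_add_finrank_orthogonalBilin_of_isQuadraticExtension hsep
  induction d generalizing U with
  | zero =>
    have hself : U = U.orthogonalBilin B := Submodule.eq_of_le_of_finrank_eq hU (by
      have := hperp U
      lia)
    have hiso : (U : Set V) ⊆ isotropicVectors B := fun x hx => hU hx x hx
    rw [← hself, Set.inter_eq_self_of_subset_right hiso, ncard_coe_submodule E]
    ring
  | succ d ih =>
    obtain ⟨x, hxU, hxU', hx⟩ := exists_isotropic_mem_orthogonalBilin_notMem hB hsep (U := U)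
      (by lia)
    have hrank := Submodule.finrank_sup_span_singleton hxU'
    have hsmaller := ih (hU.sup_span_singleton hB hxU hx) (by lia)
    have hsplit := Set.ncard_inter_add_ncard_sdiff_eq_ncard
      (isotropicVectors B ∩ U.orthogonalBilin B) (LinearMap.ker (B x) : Set V)
    have hsplit' := Set.ncard_inter_add_ncard_sdiff_eq_ncard
      (U.orthogonalBilin B : Set V) (LinearMap.ker (B x) : Set V)
    have hdiff := ncard_isotropicVectors_inter_sdiff_ker_mul_card hB hx hxU
    have hU' := hperp (U ⊔ Submodule.span F {x})
    rw [Set.inter_assoc, Set.inter_sdiff_assoc] at hsplit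
    rw [← Submodule.coe_inf, ← orthogonalBilin_sup_span_singleton] at hsplit hsplit'
    rw [ncard_coe_submodule E, ncard_coe_submodule E, ← hdiff,
      show finrank F ((U ⊔ Submodule.span F {x}).orthogonalBilin B) =
        finrank F U + 2 * d + 1 by lia,
      show finrank F (U.orthogonalBilin B) = finrank F U + 2 * d + 2 by have := hperp U; lia]
      at hsplit'
    rw [hrank] at hsmaller
    rw [← hsplit]
    zify at hsmaller hsplit' ⊢
    linear_combination hsmaller + hsplit'

theorem IsTotallyIsotropic.ncard_isotropicVectors_inter_orthogonalBilin_sdiff (hB : B.IsSymm)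
    (hsep : B.SeparatingLeft) (d : ℕ) {U : Submodule F V} (hU : IsTotallyIsotropic B U)
    (hdim : 2 * (finrank F U + (d + 1)) = finrank F V) :
    ((isotropicVectors B ∩ U.orthogonalBilin B) \ U).ncard =
      (q ^ (2 * (finrank F U + (d + 1))) - q ^ (2 * finrank F U)) * (q ^ (2 * d + 1) + 1) := by
  have hle : q ^ (2 * finrank F U) ≤ q ^ (2 * (finrank F U + (d + 1))) :=
    Nat.pow_le_pow_right Fintype.card_pos (by lia)
  have hsub : (U : Set V) ⊆ isotropicVectors B ∩ U.orthogonalBilin B :=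
    fun x hx => ⟨hU hx x hx, hU hx⟩
  have hsplit := Set.ncard_sdiff_add_ncard_of_subset hsub
  have hcount := hU.ncard_isotropicVectors_inter_orthogonalBilin hB hsep (d + 1) hdim
  rw [← hsplit, ncard_coe_submodule E] at hcount
  refine Nat.eq_of_mul_eq_mul_right (Fintype.card_pos (α := E)) ?_
  zify [hle] at hcount ⊢
  linear_combination hcount

theorem ncard_isLagrangian_and_le (hB : B.IsSymm) (hsep : B.SeparatingLeft) (d : ℕ)
    {U : Submodule F V} (hU : IsTotallyIsotropic B U)
    (hdim : 2 * (finrank F U + d) = finrank F V) :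
    {P | IsLagrangian B P ∧ U ≤ P}.ncard = ∏ i ∈ Finset.range d, (q ^ (2 * i + 1) + 1) := by
  induction d generalizing U with
  | zero =>
    have hset : {P | IsLagrangian B P ∧ U ≤ P} = {U} := by
      ext P
      refine ⟨fun ⟨hP, hUP⟩ => ?_, ?_⟩
      · exact (Submodule.eq_of_le_of_finrank_eq hUP (by have := hP.two_mul_finrank; lia)).symm
      · rintro rfl
        exact ⟨⟨hU, hdim⟩, le_rfl⟩
    rw [hset, Set.ncard_singleton, Finset.prod_range_zero]
  | succ d ih =>
    have hcount := ncard_mul_eq_ncard_mul (fun (P : Submodule F V) (x : V) => x ∈ P)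
      (s := {P | IsLagrangian B P ∧ U ≤ P}) (t := (isotropicVectors B ∩ U.orthogonalBilin B) \ U)
      (m := q ^ (2 * (finrank F U + (d + 1))) - q ^ (2 * finrank F U))
      (n := ∏ i ∈ Finset.range d, (q ^ (2 * i + 1) + 1)) ?_ ?_
    · rw [hU.ncard_isotropicVectors_inter_orthogonalBilin_sdiff hB hsep d hdim, mul_assoc,
        mul_comm] at hcount
      rw [Finset.prod_range_succ, mul_comm (∏ i ∈ _, _)]
      refine Nat.eq_of_mul_eq_mul_left (Nat.sub_pos_of_lt ?_) hcount
      exact Nat.pow_lt_pow_right Fintype.one_lt_card (by lia)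
    · rintro P ⟨hP, hUP⟩
      have hrank : finrank F P = finrank F U + (d + 1) := by have := hP.two_mul_finrank; lia
      rw [hP.isTotallyIsotropic.isotropicVectors_inter_orthogonalBilin_sdiff hUP,
        Set.ncard_sdiff hUP, ncard_coe_submodule E, ncard_coe_submodule E, hrank]
    · rintro x ⟨⟨hx, hxU⟩, hxU'⟩
      have hrank := Submodule.finrank_sup_span_singleton hxU'
      rw [← ih (hU.sup_span_singleton hB hxU hx) (by lia)]
      simp [and_assoc]

theorem natCard_isLagrangian (hB : B.IsSymm) (hsep : B.SeparatingLeft) {n : ℕ}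
    (hn : finrank F V = 2 * n) :
    Nat.card {P : Submodule F V // IsLagrangian B P} =
      ∏ i ∈ Finset.range n, (q ^ (2 * i + 1) + 1) := by
  rw [← ncard_isLagrangian_and_le hB hsep n (U := ⊥) bot_le (by simp [hn])]
  simp [← Nat.card_coe_set_eq, Set.coe_ofPred]

end Hermitian

theorem linearIndependent_ringHom_comp {K L κ ι : Type*} [Field K] [Field L] [Finite ι]
    (σ : K →+* L) {v : κ → ι → K} (hv : LinearIndependent K v) :
    LinearIndependent L fun i => σ ∘ v i :=
  let _ := σ.toAlgebra
  linearIndependent_algebraMap_comp_iff.2 hv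

section DiagonalForm

variable {K : Type*} [Field K] {σ : K →+* K} {ι : Type*} [Fintype ι]

/-- The sesquilinear form `∑ i, σ (x i) * y i` on `ι → K`. For the Frobenius `σ x = x ^ q` its
values on the diagonal are the values of the Fermat form of degree `q + 1`. -/
def diagonalForm (σ : K →+* K) (ι : Type*) [Fintype ι] : (ι → K) →ₛₗ[σ] (ι → K) →ₗ[K] K :=
  LinearMap.mk₂'ₛₗ σ (RingHom.id K) (fun x y => ∑ i, σ (x i) * y i)
    (fun x x' y => by simp [add_mul, Finset.sum_add_distrib])
    (fun c x y => by simp [Finset.mul_sum, mul_assoc])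
    (fun x y y' => by simp [mul_add, Finset.sum_add_distrib])
    (fun c x y => by simp [Finset.mul_sum, mul_left_comm])

theorem diagonalForm_apply (x y : ι → K) : diagonalForm σ ι x y = ∑ i, σ (x i) * y i :=
  rfl

theorem separatingLeft_diagonalForm : (diagonalForm σ ι).SeparatingLeft := by
  classical
  intro x hx
  ext i
  simpa [diagonalForm_apply, Pi.single_apply] using hx (Pi.single i 1)

theorem isSymm_diagonalForm (hσ : ∀ a, σ (σ a) = a) : (diagonalForm σ ι).IsSymm :=
  ⟨fun x y => by simp [diagonalForm_apply, hσ, mul_comm]⟩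

theorem diagonalForm_eq_dotProductEquiv [DecidableEq ι] (x : ι → K) :
    diagonalForm σ ι x = dotProductEquiv K ι (σ ∘ x) :=
  LinearMap.ext fun _ => rfl

theorem finrank_add_finrank_orthogonalBilin_diagonalForm (U : Submodule K (ι → K)) :
    finrank K U + finrank K (U.orthogonalBilin (diagonalForm σ ι)) = Fintype.card ι := by
  classical
  have b := Module.finBasis K U
  have hb : LinearIndependent K fun i => σ ∘ (b i : ι → K) :=
    linearIndependent_ringHom_comp σ (b.linearIndependent.map' U.subtype U.ker_subtype)
  have hdual : LinearIndependent K fun i => diagonalForm σ ι (b i) := by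
    simp only [diagonalForm_eq_dotProductEquiv]
    exact hb.map' (dotProductEquiv K ι).toLinearMap (dotProductEquiv K ι).ker
  rw [finrank_add_finrank_orthogonalBilin_of_linearIndependent b hdual, finrank_pi]

theorem IsLagrangian.orthogonalBilin_eq {P : Submodule K (ι → K)}
    (hP : IsLagrangian (diagonalForm σ ι) P) : P.orthogonalBilin (diagonalForm σ ι) = P := by
  have hrank := hP.two_mul_finrank
  have hperp := finrank_add_finrank_orthogonalBilin_diagonalForm (σ := σ) P
  rw [finrank_pi] at hrank
  exact (Submodule.eq_of_le_of_finrank_eq hP.isTotallyIsotropic (by lia)).symm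

theorem IsLagrangian.comp_comp_mem {P : Submodule K (ι → K)}
    (hP : IsLagrangian (diagonalForm σ ι) P) {x : ι → K} (hx : x ∈ P) : σ.comp σ ∘ x ∈ P := by
  rw [← hP.orthogonalBilin_eq]
  intro z hz
  have hxz : diagonalForm σ ι x z = 0 := hP.isTotallyIsotropic hz x hx
  calc diagonalForm σ ι z (σ.comp σ ∘ x)
      = σ (diagonalForm σ ι x z) := by simp [diagonalForm_apply, mul_comm]
    _ = 0 := by rw [hxz, map_zero]

end DiagonalForm

section Descent

variable {K ι : Type*} [Field K] [Finite ι] {ψ : K →+* K} {P : Submodule K (ι → K)}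

theorem exists_comp_eq_self_support_subset (hψ : ∀ x ∈ P, ψ ∘ x ∈ P) {x : ι → K} (hx : x ∈ P)
    (hx0 : x ≠ 0) :
    ∃ v ∈ P, v ≠ 0 ∧ ψ ∘ v = v ∧ Function.support v ⊆ Function.support x := by
  induction hs : Function.support x using WellFoundedLT.induction generalizing x with
  | ind s ih =>
  obtain ⟨i, hi⟩ := Function.ne_iff.1 hx0
  let y := (x i)⁻¹ • x
  have hy : y ∈ P := P.smul_mem _ hx
  have hyi : y i = 1 := inv_mul_cancel₀ hi
  have hysupp : Function.support y = s := by
    rw [Function.support_const_smul_of_ne_zero _ _ (inv_ne_zero hi), hs]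
  by_cases hfix : ψ ∘ y = y
  · exact ⟨y, hy, fun h => by simp [h] at hyi, hfix, hysupp.subset⟩
  have hlt : Function.support (ψ ∘ y - y) < s := by
    refine (Set.ssubset_iff_of_subset fun j hj => ?_).2 ⟨i, ?_, ?_⟩
    · rw [← hysupp]
      contrapose hj
      simp [Function.notMem_support.1 hj]
    · simp [← hysupp, hyi]
    · simp [hyi]
  obtain ⟨v, hvP, hv0, hv, hsupp⟩ := ih _ hlt (sub_mem (hψ y hy) hy) (sub_ne_zero.2 hfix) rfl
  exact ⟨v, hvP, hv0, hv, hsupp.trans hlt.le⟩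

theorem span_comp_eq_self (hψ : ∀ x ∈ P, ψ ∘ x ∈ P) :
    Submodule.span K {v | v ∈ P ∧ ψ ∘ v = v} = P := by
  refine le_antisymm (Submodule.span_le.2 fun v hv => hv.1) fun x hx => ?_
  induction hs : Function.support x using WellFoundedLT.induction generalizing x with
  | ind s ih =>
  by_cases hx0 : x = 0
  · simp [hx0]
  obtain ⟨v, hvP, hv0, hv, hsupp⟩ := exists_comp_eq_self_support_subset hψ hx hx0
  obtain ⟨i, hi⟩ := Function.ne_iff.1 hv0
  have hvspan : (x i / v i) • v ∈ Submodule.span K {v | v ∈ P ∧ ψ ∘ v = v} :=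
    Submodule.smul_mem _ _ (Submodule.subset_span ⟨hvP, hv⟩)
  have hlt : Function.support (x - (x i / v i) • v) < s := by
    refine (Set.ssubset_iff_of_subset fun j hj => ?_).2 ⟨i, ?_, ?_⟩
    · rw [← hs]
      contrapose hj
      simp [Function.notMem_support.1 hj, Function.notMem_support.1 fun h => hj (hsupp h)]
    · exact hs ▸ hsupp hi
    · simp [div_mul_cancel₀ _ hi]
  simpa using add_mem (ih _ hlt _ (sub_mem hx (P.smul_mem (x i / v i) hvP)) rfl) hvspan

end Descent

section ScalarExtension

variable {F : Type*} (K : Type*) {ι : Type*} [Field F] [Field K] [Algebra F K]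

/-- The `K`-subspace of `ι → K` spanned by an `F`-subspace of `ι → F`; the subspaces of this form
are those defined over `F`. -/
def extendScalars (U : Submodule F (ι → F)) : Submodule K (ι → K) :=
  Submodule.span K ((algebraMap F K ∘ ·) '' U)

variable (F) {K} in
/-- The vectors of `ι → F` lying in a `K`-subspace of `ι → K`, as the inverse of extension of
scalars on subspaces defined over `F`. -/
def rationalPoints (P : Submodule K (ι → K)) : Submodule F (ι → F) :=
  (P.restrictScalars F).comap ((Algebra.linearMap F K).compLeft ι)

variable {K} in
theorem mem_rationalPoints {P : Submodule K (ι → K)} {v : ι → F} :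
    v ∈ rationalPoints F P ↔ algebraMap F K ∘ v ∈ P :=
  Iff.rfl

theorem finrank_extendScalars [Finite ι] (U : Submodule F (ι → F)) :
    finrank K (extendScalars K U) = finrank F U := by
  let b := Module.finBasis F U
  have hli : LinearIndependent K fun i => algebraMap F K ∘ (b i : ι → F) :=
    linearIndependent_ringHom_comp _ (b.linearIndependent.map' U.subtype U.ker_subtype)
  have hspan : Submodule.span K (Set.range fun i => algebraMap F K ∘ (b i : ι → F)) =
      extendScalars K U := by
    refine le_antisymm (Submodule.span_mono ?_) (Submodule.span_le.2 ?_)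
    · rintro _ ⟨i, rfl⟩
      exact ⟨b i, (b i).2, rfl⟩
    · rintro _ ⟨u, hu, rfl⟩
      lift u to U using hu
      rw [SetLike.mem_coe, ← mem_rationalPoints, ← b.sum_repr u, Submodule.coe_sum]
      exact sum_mem fun i _ =>
        Submodule.smul_mem (rationalPoints F _) _ (Submodule.subset_span ⟨i, rfl⟩)
  rw [← hspan, finrank_span_eq_card hli, Fintype.card_fin]

theorem rationalPoints_extendScalars [Finite ι] (U : Submodule F (ι → F)) :
    rationalPoints F (extendScalars K U) = U := by
  have hle : U ≤ rationalPoints F (extendScalars K U) := fun u hu =>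
    Submodule.subset_span ⟨u, hu, rfl⟩
  have hext : extendScalars K (rationalPoints F (extendScalars K U)) ≤ extendScalars K U :=
    Submodule.span_le.2 (Set.image_subset_iff.2 fun _ hv => hv)
  have hrank := Submodule.finrank_mono hext
  rw [finrank_extendScalars, finrank_extendScalars] at hrank
  exact (Submodule.eq_of_le_of_finrank_le hle hrank).symm

variable {K}

theorem extendScalars_rationalPoints_of_comp_mem [Finite ι] {ψ : K →+* K}
    (hfix : ∀ a, ψ a = a → a ∈ Set.range (algebraMap F K)) {P : Submodule K (ι → K)}
    (hP : ∀ x ∈ P, ψ ∘ x ∈ P) : extendScalars K (rationalPoints F P) = P := by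
  refine le_antisymm (Submodule.span_le.2 (Set.image_subset_iff.2 fun _ hv => hv)) ?_
  conv_lhs => rw [← span_comp_eq_self hP]
  refine Submodule.span_mono fun v ⟨hvP, hv⟩ => ?_
  choose w hw using fun i => hfix (v i) (congrFun hv i)
  obtain rfl : algebraMap F K ∘ w = v := funext hw
  exact ⟨w, hvP, rfl⟩

end ScalarExtension

section Fermat

variable {E F K ι : Type*} [Field E] [Fintype E] [Field F] [Field K] [Algebra E F] [Algebra E K]
  [Algebra F K] [Fintype ι]

theorem diagonalForm_algebraMap_comp (x y : ι → F) :
    diagonalForm (cardFrobenius E K) ι (algebraMap F K ∘ x) (algebraMap F K ∘ y) =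
      algebraMap F K (diagonalForm (cardFrobenius E F) ι x y) := by
  simp [diagonalForm_apply, cardFrobenius_apply]

theorem isTotallyIsotropic_extendScalars_iff {U : Submodule F (ι → F)} :
    IsTotallyIsotropic (diagonalForm (cardFrobenius E K) ι) (extendScalars K U) ↔
      IsTotallyIsotropic (diagonalForm (cardFrobenius E F) ι) U := by
  refine ⟨fun hU y hy x hx => ?_, fun hU y hy x hx => ?_⟩
  · refine (algebraMap F K).injective ?_
    rw [← diagonalForm_algebraMap_comp, map_zero]
    exact hU (Submodule.subset_span ⟨y, hy, rfl⟩) _ (Submodule.subset_span ⟨x, hx, rfl⟩)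
  · induction hx, hy using Submodule.span_induction₂ with
    | mem_mem x y hx hy =>
      obtain ⟨x, hx, rfl⟩ := hx
      obtain ⟨y, hy, rfl⟩ := hy
      rw [diagonalForm_algebraMap_comp, hU hy x hx, map_zero]
    | zero_left => simp
    | zero_right => simp
    | add_left x y z _ _ _ h h' => simp [h, h']
    | add_right x y z _ _ _ h h' => simp [h, h']
    | smul_left c x y _ _ h => simp [h]
    | smul_right c x y _ _ h => simp [h]

theorem isLagrangian_extendScalars_iff {U : Submodule F (ι → F)} :
    IsLagrangian (diagonalForm (cardFrobenius E K) ι) (extendScalars K U) ↔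
      IsLagrangian (diagonalForm (cardFrobenius E F) ι) U := by
  have hrank : 2 * finrank K (extendScalars K U) = finrank K (ι → K) ↔
      2 * finrank F U = finrank F (ι → F) := by
    rw [finrank_extendScalars, finrank_pi, finrank_pi]
  exact ⟨fun h => ⟨isTotallyIsotropic_extendScalars_iff.1 h.1, hrank.1 h.2⟩,
    fun h => ⟨isTotallyIsotropic_extendScalars_iff.2 h.1, hrank.2 h.2⟩⟩

theorem isLagrangian_diagonalForm_cardFrobenius_iff (hmoves : ∃ t : K, cardFrobenius E K t ≠ t)
    {n : ℕ} (hn : Fintype.card ι = 2 * n) {P : Submodule K (ι → K)} :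
    IsLagrangian (diagonalForm (cardFrobenius E K) ι) P ↔
      finrank K P = n ∧ ∀ x ∈ P, ∑ i, x i ^ (Fintype.card E + 1) = 0 := by
  have hrank : 2 * finrank K P = finrank K (ι → K) ↔ finrank K P = n := by
    rw [finrank_pi]
    lia
  have hform (x : ι → K) : diagonalForm (cardFrobenius E K) ι x x =
      ∑ i, x i ^ (Fintype.card E + 1) := by
    simp only [diagonalForm_apply, cardFrobenius_apply, pow_succ]
  simp only [← hform, ← hrank, ← isTotallyIsotropic_iff_forall_apply_self hmoves]
  exact ⟨fun h => ⟨h.2, h.1⟩, fun h => ⟨h.2, h.1⟩⟩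

variable [Algebra.IsQuadraticExtension E F]

variable (E F) in
theorem cardFrobenius_cardFrobenius_eq_self_iff {a : K} :
    cardFrobenius E K (cardFrobenius E K a) = a ↔ a ∈ Set.range (algebraMap F K) := by
  have : Finite F := Module.finite_of_finite E
  have := Fintype.ofFinite F
  rw [mem_range_algebraMap_iff_cardFrobenius_eq, cardFrobenius_apply, cardFrobenius_apply,
    cardFrobenius_apply, ← pow_mul, ← sq, ← natCard_eq_sq_of_isQuadraticExtension (F := F),
    Nat.card_eq_fintype_card]

variable (F) in
theorem IsLagrangian.extendScalars_rationalPoints {P : Submodule K (ι → K)}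
    (hP : IsLagrangian (diagonalForm (cardFrobenius E K) ι) P) :
    extendScalars K (rationalPoints F P) = P :=
  extendScalars_rationalPoints_of_comp_mem
    (fun _ => (cardFrobenius_cardFrobenius_eq_self_iff E F).1) fun _ => hP.comp_comp_mem

variable (E F K ι) in
/-- The correspondence between Lagrangian subspaces over `K` and over the quadratic extension `F`
of `E` inside `K`, which reduces counting them over `K` to counting over a finite field. -/
def lagrangianEquiv :
    {P : Submodule K (ι → K) // IsLagrangian (diagonalForm (cardFrobenius E K) ι) P} ≃
      {U : Submodule F (ι → F) // IsLagrangian (diagonalForm (cardFrobenius E F) ι) U} where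
  toFun P := ⟨rationalPoints F P.1, isLagrangian_extendScalars_iff.1
    ((P.2.extendScalars_rationalPoints F).symm ▸ P.2)⟩
  invFun U := ⟨extendScalars K U.1, isLagrangian_extendScalars_iff.2 U.2⟩
  left_inv P := Subtype.ext (P.2.extendScalars_rationalPoints F)
  right_inv U := Subtype.ext (rationalPoints_extendScalars K U.1)

variable (E F K) in
theorem exists_cardFrobenius_algebraMap_ne :
    ∃ a : F, cardFrobenius E K (algebraMap F K a) ≠ algebraMap F K a := by
  by_contra! hfix
  have hsurj : Function.Surjective (algebraMap E F) := fun a => by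
    refine (mem_range_algebraMap_iff_cardFrobenius_eq E).2 ((algebraMap F K).injective ?_)
    simpa [cardFrobenius_apply] using hfix a
  have hcard := Nat.card_le_card_of_surjective _ hsurj
  rw [natCard_eq_sq_of_isQuadraticExtension (E := E), Nat.card_eq_fintype_card] at hcard
  have := Fintype.one_lt_card (α := E)
  nlinarith

end Fermat

theorem fermat_planes_card_and_rationality_general (E F K ι : Type*) [Field E] [Fintype E]
    [Field F] [Algebra E F] [Algebra.IsQuadraticExtension E F] [Field K]
    [Algebra F K] [Fintype ι] {n : ℕ} (hn : Fintype.card ι = 2 * n) :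
    Nat.card {P : Submodule K (ι → K) //
        finrank K P = n ∧ ∀ x ∈ P, ∑ i, x i ^ (Fintype.card E + 1) = 0} =
      ∏ i ∈ Finset.range n, (Fintype.card E ^ (2 * i + 1) + 1) ∧
    ∀ P : Submodule K (ι → K),
      (finrank K P = n ∧ ∀ x ∈ P, ∑ i, x i ^ (Fintype.card E + 1) = 0) →
      ∃ S : Set (ι → K), (∀ v ∈ S, ∀ j, v j ^ Fintype.card E ^ 2 = v j) ∧
        P = Submodule.span K S := by
  let _ : Algebra E K := ((algebraMap F K).comp (algebraMap E F)).toAlgebra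
  obtain ⟨a, ha⟩ := exists_cardFrobenius_algebraMap_ne E F K
  simp only [← isLagrangian_diagonalForm_cardFrobenius_iff ⟨_, ha⟩ hn]
  have : Finite F := Module.finite_of_finite E
  constructor
  · rw [Nat.card_congr (lagrangianEquiv E F K ι)]
    exact natCard_isLagrangian
      (isSymm_diagonalForm cardFrobenius_cardFrobenius_of_isQuadraticExtension)
      separatingLeft_diagonalForm (by rw [finrank_pi, hn])
  · intro P hP
    refine ⟨_, ?_, (hP.extendScalars_rationalPoints F).symm⟩
    rintro _ ⟨u, -, rfl⟩ j
    have hfix := (cardFrobenius_cardFrobenius_eq_self_iff E F (K := K)).2 ⟨u j, rfl⟩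
    rwa [cardFrobenius_apply, cardFrobenius_apply, ← pow_mul, ← sq] at hfix

/-- the Fermat cubic fourfold over an algebraically closed field
of characteristic 2 contains exactly 891 planes, and each of them is defined
over `F₄` (is spanned by vectors all of whose coordinates `a` satisfy
`a⁴ = a`). -/
theorem fermat_planes_card_and_rationality (K : Type*) [Field K]
    [IsAlgClosed K] [CharP K 2] :
    Nat.card {P : Submodule K (Fin 6 → K) // IsFermatPlane K P} = 891 ∧
    ∀ P : Submodule K (Fin 6 → K), IsFermatPlane K P →
      ∃ S : Set (Fin 6 → K), (∀ v ∈ S, ∀ j, (v j) ^ 4 = v j) ∧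
        P = Submodule.span K S := by
  let _ : Algebra (ZMod 2) K := ZMod.algebra K 2
  let f : GaloisField 2 2 →ₐ[ZMod 2] K := IsAlgClosed.lift
  let _ : Algebra (GaloisField 2 2) K := f.toRingHom.toAlgebra
  have : Algebra.IsQuadraticExtension (ZMod 2) (GaloisField 2 2) :=
    ⟨GaloisField.finrank 2 two_ne_zero⟩
  exact fermat_planes_card_and_rationality_general (ZMod 2) (GaloisField 2 2) K (Fin 6) (n := 3)
    rfl
end

section
/- Let A = (0^{21}, 4, 0, −4) and B = (0^{21}, 0, 4, −4) be the indicated vectors of the Leech lattice Λ₂₄ (with inner product (x₁y₁+⋯+x₂₄y₂₄)/8). Then the set T_{AB} = {T ∈ Λ₂₄ : ⟨T,T⟩ = ⟨T−A,T−A⟩ = ⟨T−B,T−B⟩ = 4} has exactly 891 elements. -/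
open scoped BigOperators

/-- A generator matrix of the extended binary Golay code (MOG coordinates). -/
def golayMatrix : Matrix (Fin 12) (Fin 24) (ZMod 2) :=
  !![0, 0, 0, 0, 0, 0, 0, 0, 0, 0, 0, 0, 0, 0, 0, 0, 1, 1, 1, 1, 1, 1, 1, 1;
    0, 0, 0, 0, 0, 0, 0, 0, 0, 0, 0, 0, 1, 1, 1, 1, 0, 0, 0, 0, 1, 1, 1, 1;
    0, 0, 0, 0, 0, 0, 0, 0, 0, 0, 1, 1, 0, 0, 1, 1, 0, 0, 1, 1, 0, 0, 1, 1;
    0, 0, 0, 0, 0, 0, 0, 0, 0, 1, 0, 1, 0, 1, 0, 1, 0, 1, 0, 1, 0, 1, 0, 1;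
    0, 0, 0, 0, 0, 0, 0, 0, 1, 0, 0, 1, 0, 1, 1, 0, 0, 1, 1, 0, 1, 0, 0, 1;
    0, 0, 0, 0, 0, 0, 1, 1, 0, 0, 0, 0, 0, 0, 1, 1, 0, 1, 1, 0, 0, 1, 0, 1;
    0, 0, 0, 0, 0, 1, 0, 1, 0, 0, 0, 0, 0, 1, 0, 1, 0, 0, 1, 1, 0, 1, 1, 0;
    0, 0, 0, 0, 1, 0, 0, 1, 0, 0, 0, 0, 0, 1, 1, 0, 0, 1, 0, 1, 1, 1, 0, 0;
    0, 0, 0, 1, 0, 0, 0, 1, 0, 0, 0, 1, 0, 0, 0, 1, 0, 1, 1, 1, 1, 0, 0, 0;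
    0, 0, 1, 0, 0, 0, 0, 1, 0, 0, 0, 1, 0, 0, 1, 0, 0, 0, 1, 0, 1, 1, 1, 0;
    0, 1, 0, 0, 0, 0, 0, 1, 0, 0, 0, 1, 0, 1, 0, 0, 0, 0, 0, 1, 1, 0, 1, 1;
    1, 0, 0, 0, 0, 0, 0, 1, 0, 0, 0, 1, 0, 1, 1, 1, 0, 1, 0, 0, 0, 0, 1, 0]

/-- The extended binary Golay code `C₂₄`. -/
def GolayCode : Submodule (ZMod 2) (Fin 24 → ZMod 2) :=
  Submodule.span (ZMod 2) (Set.range fun i => golayMatrix i)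

/-- Membership in the Leech lattice `Λ₂₄ ⊂ ℤ²⁴` (coordinates scaled by `√8`),
via the standard congruence characterization. -/
def IsLeech (x : Fin 24 → ℤ) : Prop :=
  ∃ m : ℤ, (m = 0 ∨ m = 1) ∧ (∀ i, (2:ℤ) ∣ (x i - m)) ∧
    ((fun i => if (4:ℤ) ∣ (x i - m - 2) then (1 : ZMod 2) else 0) ∈ GolayCode) ∧
    (8:ℤ) ∣ ((∑ i, x i) - 4 * m)

/-- The inner product `⟨x, y⟩ = (Σ xᵢ yᵢ)/8` on the Leech lattice. -/
def leechInner (x y : Fin 24 → ℤ) : ℚ := (∑ i, (x i : ℚ) * (y i : ℚ)) / 8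

/-- The lattice point `A = (0²¹, 4, 0, −4)`. -/
def vA : Fin 24 → ℤ := fun i => if i.val = 21 then 4 else if i.val = 23 then -4 else 0

/-- The lattice point `B = (0²¹, 0, 4, −4)`. -/
def vB : Fin 24 → ℤ := fun i => if i.val = 22 then 4 else if i.val = 23 then -4 else 0

/-- `T_AB`: lattice points `T` with `|OT| = |AT| = |BT| = 2`. -/
def TAB : Set (Fin 24 → ℤ) :=
  {T | IsLeech T ∧ leechInner T T = 4 ∧
       leechInner (T - vA) (T - vA) = 4 ∧ leechInner (T - vB) (T - vB) = 4}

/-!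
The Golay code is self-orthogonal and doubly even of dimension `12`, hence self-dual. A word of
weight `4` would be a linear relation between four columns of the generator matrix, and there is
none, so the minimum weight is `8`. By duality the codewords take every pattern on fewer than eight
coordinates equally often. This gives the first two moments of the weight over the codewords through
three points, and these moments force exactly `21` octads through three points.

A vector `T` of `T_AB` has squared length `32` in `ℤ²⁴` and satisfies `T₂₁ = T₂₂ = T₂₃ + 4`. Modulo
`4` there are three cases:
* `T = 4 z` with `|z|² = 2`: either `z = e₂₁ + e₂₂`, or `z = ± eₖ - e₂₃` with `k < 21`, giving
  `1 + 42` vectors;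
* `T = 2 y` with `y` not even: `y` is an octad through the last three points with signs, an even
  number of them negative, of which the last three are `+ + -`, giving `21 * 16` vectors;
* `T` odd: `T = 1 - 2 (c + 2 e₂₃)` for a codeword `c` vanishing at the last three points, giving
  `2 ^ 12 / 2 ^ 3` vectors.
-/

open Module Finset
open scoped Matrix

section LinearCode

variable {K ι : Type*} [Field K] [Fintype ι] [DecidableEq ι]

/-- The dual code of a linear code, with respect to the standard dot product. -/
def dualCode (C : Submodule K (ι → K)) : Submodule K (ι → K) :=
  C.dualAnnihilator.comap (dotProductEquiv K ι).toLinearMap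

lemma mem_dualCode {C : Submodule K (ι → K)} {y : ι → K} :
    y ∈ dualCode C ↔ ∀ c ∈ C, y ⬝ᵥ c = 0 :=
  Submodule.mem_dualAnnihilator _

lemma finrank_add_finrank_dualCode (C : Submodule K (ι → K)) :
    finrank K C + finrank K (dualCode C) = Fintype.card ι := by
  have hdual : finrank K (dualCode C) = finrank K C.dualAnnihilator :=
    ((dotProductEquiv K ι).ofSubmodule' C.dualAnnihilator).finrank_eq
  rw [hdual, Subspace.finrank_add_finrank_dualAnnihilator_eq, finrank_fintype_fun_eq_card]

lemma span_le_dualCode_span {s : Set (ι → K)} (h : ∀ x ∈ s, ∀ y ∈ s, x ⬝ᵥ y = 0) :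
    Submodule.span K s ≤ dualCode (Submodule.span K s) := by
  intro x hx
  rw [mem_dualCode]
  intro y hy
  induction hx, hy using Submodule.span_induction₂ with
  | mem_mem x y hx hy => exact h x hx y hy
  | zero_left => exact zero_dotProduct _
  | zero_right => exact dotProduct_zero _
  | add_left x y z _ _ _ hx hy => rw [add_dotProduct, hx, hy, add_zero]
  | add_right x y z _ _ _ hy hz => rw [dotProduct_add, hy, hz, add_zero]
  | smul_left r x y _ _ hxy => rw [smul_dotProduct, hxy, smul_zero]
  | smul_right r x y _ _ hxy => rw [dotProduct_smul, hxy, smul_zero]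

lemma surjective_restrict_of_dualCode {C : Submodule K (ι → K)} {S : Finset ι}
    (h : ∀ y ∈ dualCode C, (∀ i ∉ S, y i = 0) → y = 0) :
    Function.Surjective
      ((LinearMap.funLeft K K ((↑) : S → ι)).comp C.subtype) := by
  rw [← LinearMap.range_eq_top]
  by_contra hrange
  obtain ⟨φ, hφ, hle⟩ := Submodule.exists_le_ker_of_lt_top _ (lt_top_iff_ne_top.2 hrange)
  set restrict := LinearMap.funLeft K K ((↑) : S → ι)
  set y := (dotProductEquiv K ι).symm (φ.comp restrict)
  have hy (x : ι → K) : y ⬝ᵥ x = φ (restrict x) :=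
    LinearMap.congr_fun ((dotProductEquiv K ι).apply_symm_apply (φ.comp restrict)) x
  have hyC : y ∈ dualCode C := mem_dualCode.2 fun c hc ↦ by
    rw [hy]
    exact hle ⟨⟨c, hc⟩, rfl⟩
  have hyS (i : ι) (hi : i ∉ S) : y i = 0 := by
    have : restrict (Pi.single i 1) = 0 := by
      ext j
      exact Pi.single_eq_of_ne (ne_of_mem_of_not_mem j.2 hi) 1
    rw [← dotProduct_single_one y i, hy, this, map_zero]
  refine hφ (LinearMap.ext fun w ↦ ?_)
  obtain ⟨x, rfl⟩ := LinearMap.funLeft_surjective_of_injective K K _ Subtype.val_injective w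
  rw [← hy, h y hyC hyS, zero_dotProduct, LinearMap.zero_apply]

lemma card_fiber_mul_card {V W : Type*} [AddCommGroup V] [Module K V] [AddCommGroup W]
    [Module K W] [Fintype V] [Fintype W] [DecidableEq W] {f : V →ₗ[K] W}
    (hf : Function.Surjective f) (w : W) :
    #{v | f v = w} * Fintype.card W = Fintype.card V := by
  have hfiber : ∀ w' ∈ (univ : Finset W), #{v | f v = w'} = #{v | f v = w} := fun w' _ ↦
    AddMonoidHom.card_fiber_eq_of_mem_range f (hf w') (hf w)
  have hsum : Fintype.card V = ∑ w', #{v | f v = w'} :=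
    card_eq_sum_card_fiberwise fun v _ ↦ mem_univ (f v)
  rw [hsum, sum_const_nat hfiber, card_univ, mul_comm]

open scoped Classical in
/-- The codewords of `C` that agree with the word `a` on the coordinates in `S`. -/
noncomputable def codewordsEqOn [Fintype K] (C : Submodule K (ι → K)) (S : Finset ι) (a : ι → K) :
    Finset (ι → K) :=
  {c | c ∈ C ∧ ∀ i ∈ S, c i = a i}

lemma mem_codewordsEqOn [Fintype K] {C : Submodule K (ι → K)} {S : Finset ι} {a c : ι → K} :
    c ∈ codewordsEqOn C S a ↔ c ∈ C ∧ ∀ i ∈ S, c i = a i := by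
  simp [codewordsEqOn]

lemma card_codewordsEqOn_mul [Fintype K] {C : Submodule K (ι → K)} {S : Finset ι}
    (h : ∀ y ∈ dualCode C, (∀ i ∉ S, y i = 0) → y = 0) (a : ι → K) :
    #(codewordsEqOn C S a) * Fintype.card K ^ #S = Nat.card C := by
  classical
  have hcard := card_fiber_mul_card (surjective_restrict_of_dualCode h) fun i ↦ a i
  rw [Fintype.card_fun, Fintype.card_coe, ← Nat.card_eq_fintype_card (α := C)] at hcard
  rw [← hcard, ← card_map (Function.Embedding.subtype (· ∈ C))]
  congr 2
  ext c
  simp only [mem_codewordsEqOn, mem_map, mem_filter_univ]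
  constructor
  · rintro ⟨hc, hca⟩
    exact ⟨⟨c, hc⟩, funext fun i ↦ hca i i.2, rfl⟩
  · rintro ⟨c, hca, rfl⟩
    exact ⟨c.2, fun i hi ↦ congr_fun hca ⟨i, hi⟩⟩

end LinearCode

section BinaryWord

variable {ι : Type*} [Fintype ι]

lemma hammingNorm_eq_sum_val (x : ι → ZMod 2) : hammingNorm x = ∑ i, (x i).val := by
  have hval : ∀ a : ZMod 2, a.val = if a ≠ 0 then 1 else 0 := by decide
  simp only [hval, hammingNorm, card_filter]

lemma hammingNorm_add_add_two_mul (x y : ι → ZMod 2) :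
    hammingNorm (x + y) + 2 * hammingNorm (x * y) = hammingNorm x + hammingNorm y := by
  have hval : ∀ a b : ZMod 2, (a + b).val + 2 * (a * b).val = a.val + b.val := by decide
  simp only [hammingNorm_eq_sum_val, Pi.add_apply, Pi.mul_apply, mul_sum, ← sum_add_distrib, hval]

lemma natCast_hammingNorm_mul (x y : ι → ZMod 2) : (hammingNorm (x * y) : ZMod 2) = x ⬝ᵥ y := by
  simp [hammingNorm_eq_sum_val, dotProduct]

lemma hammingNorm_one_add_add (x : ι → ZMod 2) :
    hammingNorm (1 + x) + hammingNorm x = Fintype.card ι := by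
  have hval : ∀ a : ZMod 2, (1 + a).val + a.val = 1 := by decide
  simp [hammingNorm_eq_sum_val, ← sum_add_distrib, hval]

lemma four_dvd_hammingNorm_of_mem_span {s : Set (ι → ZMod 2)} (hs : ∀ x ∈ s, 4 ∣ hammingNorm x)
    (horth : ∀ x ∈ s, ∀ y ∈ s, x ⬝ᵥ y = 0) {x : ι → ZMod 2}
    (hx : x ∈ Submodule.span (ZMod 2) s) : 4 ∣ hammingNorm x := by
  classical
  induction hx using Submodule.span_induction with
  | mem x hx => exact hs x hx
  | zero => simp
  | add x y hx hy hx4 hy4 =>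
    have hdot : x ⬝ᵥ y = 0 := mem_dualCode.1 (span_le_dualCode_span horth hx) y hy
    rw [← natCast_hammingNorm_mul, ZMod.natCast_eq_zero_iff] at hdot
    have := hammingNorm_add_add_two_mul x y
    lia
  | smul a x _ hx4 =>
    obtain rfl | rfl : a = 0 ∨ a = 1 := by revert a; decide
    · simp
    · simpa using hx4

variable [DecidableEq ι] {C : Submodule (ZMod 2) (ι → ZMod 2)} {R : Finset ι}

lemma sum_mul_hammingNorm_codewordsEqOn_one (g : (ι → ZMod 2) → ℕ) :
    ∑ c ∈ codewordsEqOn C R 1, g c * hammingNorm c =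
      ∑ i, ∑ c ∈ codewordsEqOn C (insert i R) 1, g c := by
  have hval : ∀ a : ZMod 2, a.val = if a = 1 then 1 else 0 := by decide
  have hinsert (i : ι) : codewordsEqOn C (insert i R) 1 = {c ∈ codewordsEqOn C R 1 | c i = 1} := by
    ext c
    simp only [mem_codewordsEqOn, forall_mem_insert, mem_filter]
    tauto
  simp only [hammingNorm_eq_sum_val, mul_sum, hval, mul_ite, mul_one, mul_zero, hinsert,
    sum_filter]
  exact sum_comm

lemma sum_eq_of_eqOn_of_eqOn_compl {f : ι → ℕ} {a b : ℕ} (ha : ∀ i ∈ R, f i = a)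
    (hb : ∀ i ∉ R, f i = b) : ∑ i, f i = #R * a + #Rᶜ * b := by
  rw [← sum_add_sum_compl R, sum_const_nat ha, sum_const_nat fun i hi ↦ hb i (mem_compl.1 hi)]

end BinaryWord

section GolayCode

lemma golayMatrix_mul_transpose : golayMatrix * golayMatrixᵀ = 0 := by decide +kernel

lemma four_dvd_hammingNorm_golayMatrix (r : Fin 12) : 4 ∣ hammingNorm (golayMatrix r) := by
  revert r
  decide +kernel

lemma dotProduct_golayMatrix_row (r s : Fin 12) : golayMatrix r ⬝ᵥ golayMatrix s = 0 :=
  congr_fun₂ golayMatrix_mul_transpose r s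

lemma golayCode_le_dualCode : GolayCode ≤ dualCode GolayCode := by
  refine span_le_dualCode_span ?_
  rintro _ ⟨r, rfl⟩ _ ⟨s, rfl⟩
  exact dotProduct_golayMatrix_row r s

lemma linearIndependent_golayMatrix : LinearIndependent (ZMod 2) fun r ↦ golayMatrix r := by
  have hpivot : golayMatrix.submatrix id ![16, 12, 10, 9, 8, 6, 5, 4, 3, 2, 1, 0] = 1 := by
    decide +kernel
  refine LinearIndependent.of_comp
    (LinearMap.funLeft (ZMod 2) (ZMod 2) ![16, 12, 10, 9, 8, 6, 5, 4, 3, 2, 1, 0]) ?_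
  change LinearIndependent (ZMod 2)
    (golayMatrix.submatrix id ![16, 12, 10, 9, 8, 6, 5, 4, 3, 2, 1, 0]).row
  rw [hpivot]
  exact Matrix.linearIndependent_rows_of_isUnit isUnit_one

lemma finrank_golayCode : finrank (ZMod 2) GolayCode = 12 :=
  finrank_span_eq_card linearIndependent_golayMatrix

lemma natCard_golayCode : Nat.card GolayCode = 2 ^ 12 := by
  rw [Module.natCard_eq_pow_finrank (K := ZMod 2), finrank_golayCode, Nat.card_zmod]

lemma dualCode_golayCode : dualCode GolayCode = GolayCode := by
  refine (Submodule.eq_of_le_of_finrank_eq golayCode_le_dualCode ?_).symm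
  have := finrank_add_finrank_dualCode GolayCode
  rw [finrank_golayCode, Fintype.card_fin] at this
  rw [finrank_golayCode]
  lia

lemma four_dvd_hammingNorm_of_mem_golayCode {c : Fin 24 → ZMod 2} (hc : c ∈ GolayCode) :
    4 ∣ hammingNorm c := by
  refine four_dvd_hammingNorm_of_mem_span ?_ ?_ hc
  · rintro _ ⟨r, rfl⟩
    exact four_dvd_hammingNorm_golayMatrix r
  · rintro _ ⟨r, rfl⟩ _ ⟨s, rfl⟩
    exact dotProduct_golayMatrix_row r s

lemma golayMatrix_col_add_ne : ∀ i j : Fin 24, i < j → ∀ k, j < k → ∀ l, k < l →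
    golayMatrixᵀ i + golayMatrixᵀ j ≠ golayMatrixᵀ k + golayMatrixᵀ l := by
  decide +kernel

/-- Each codeword is orthogonal to the rows of the generator matrix, hence one of weight four would
make four of its columns sum to zero. -/
lemma hammingNorm_ne_four_of_mem_golayCode {c : Fin 24 → ZMod 2} (hc : c ∈ GolayCode) :
    hammingNorm c ≠ 4 := by
  intro h4
  set e := (univ.filter (c · ≠ 0)).orderEmbOfFin h4
  have hlt {a b : Fin 4} (hab : a < b) : e a < e b := e.strictMono hab
  refine golayMatrix_col_add_ne (e 0) (e 1) (hlt (by decide)) (e 2) (hlt (by decide)) (e 3)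
    (hlt (by decide)) (funext fun r ↦ ?_)
  have horth : c ⬝ᵥ golayMatrix r = 0 :=
    mem_dualCode.1 (golayCode_le_dualCode hc) _ (Submodule.subset_span ⟨r, rfl⟩)
  have hsum : c ⬝ᵥ golayMatrix r = ∑ a, golayMatrix r (e a) := by
    have hmul : ∀ a b : ZMod 2, a * b = if a ≠ 0 then b else 0 := by decide
    simp only [dotProduct, hmul]
    rw [← sum_filter, ← map_orderEmbOfFin_univ _ h4, sum_map]
    rfl
  rw [horth, Fin.sum_univ_four] at hsum
  have hadd : ∀ a b c d : ZMod 2, 0 = a + b + c + d → a + b = c + d := by decide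
  exact hadd _ _ _ _ hsum

lemma eight_le_hammingNorm_of_mem_golayCode {c : Fin 24 → ZMod 2} (hc : c ∈ GolayCode)
    (hc0 : c ≠ 0) : 8 ≤ hammingNorm c := by
  have := four_dvd_hammingNorm_of_mem_golayCode hc
  have := hammingNorm_ne_four_of_mem_golayCode hc
  have := hammingNorm_pos_iff.2 hc0
  lia

lemma one_mem_golayCode : 1 ∈ GolayCode := by
  rw [← dualCode_golayCode, mem_dualCode]
  intro c hc
  rw [← natCast_hammingNorm_mul, one_mul, ZMod.natCast_eq_zero_iff]
  exact (by norm_num : 2 ∣ 4).trans (four_dvd_hammingNorm_of_mem_golayCode hc)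

lemma hammingNorm_mem_of_mem_golayCode {c : Fin 24 → ZMod 2} (hc : c ∈ GolayCode)
    (hc0 : c ≠ 0) (hc1 : c ≠ 1) : hammingNorm c ∈ ({8, 12, 16} : Finset ℕ) := by
  have hcompl : 1 + c ≠ 0 := fun h ↦ hc1 <| by
    rw [← sub_eq_zero, CharTwo.sub_eq_add, add_comm, h]
  have h8 := eight_le_hammingNorm_of_mem_golayCode hc hc0
  have h8' := eight_le_hammingNorm_of_mem_golayCode (add_mem one_mem_golayCode hc) hcompl
  have h4 := four_dvd_hammingNorm_of_mem_golayCode hc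
  have hsum := hammingNorm_one_add_add c
  rw [Fintype.card_fin] at hsum
  simp only [mem_insert, mem_singleton]
  lia

lemma card_codewordsEqOn_golayCode_mul {S : Finset (Fin 24)} (hS : #S < 8) (a : Fin 24 → ZMod 2) :
    #(codewordsEqOn GolayCode S a) * 2 ^ #S = 2 ^ 12 := by
  suffices h : ∀ y ∈ dualCode GolayCode, (∀ i ∉ S, y i = 0) → y = 0 by
    rw [← natCard_golayCode, ← card_codewordsEqOn_mul h a, ZMod.card]
  intro y hy hyS
  rw [dualCode_golayCode] at hy
  by_contra hy0
  have hsupp : hammingNorm y ≤ #S :=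
    card_le_card fun i hi ↦ by_contra fun hiS ↦ (mem_filter.1 hi).2 (hyS i hiS)
  have := eight_le_hammingNorm_of_mem_golayCode hy hy0
  lia

lemma two_mul_sum_hammingNorm_golayCode_through {R : Finset (Fin 24)} (hR : #R < 7) :
    2 * ∑ c ∈ codewordsEqOn GolayCode R 1, hammingNorm c =
      (24 + #R) * #(codewordsEqOn GolayCode R 1) := by
  have hinsert (i : Fin 24) (hi : i ∉ R) :
      2 * #(codewordsEqOn GolayCode (insert i R) 1) = #(codewordsEqOn GolayCode R 1) := by
    have hcard := card_insert_of_notMem hi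
    have h := card_codewordsEqOn_golayCode_mul (S := insert i R) (by lia) 1
    rw [← card_codewordsEqOn_golayCode_mul (hR.trans (by norm_num)) 1, hcard, pow_succ'] at h
    exact Nat.eq_of_mul_eq_mul_right (pow_pos two_pos #R) (by linarith)
  have hmoment := sum_mul_hammingNorm_codewordsEqOn_one (C := GolayCode) (R := R) fun _ ↦ 1
  simp only [one_mul, ← card_eq_sum_ones] at hmoment
  rw [hmoment, mul_sum, sum_eq_of_eqOn_of_eqOn_compl (R := R)
    (fun i hi ↦ by rw [insert_eq_of_mem hi]) hinsert]
  have hcompl : #R + #Rᶜ = 24 := card_add_card_compl R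
  calc #R * (2 * #(codewordsEqOn GolayCode R 1)) + #Rᶜ * #(codewordsEqOn GolayCode R 1)
      = (#R + #Rᶜ + #R) * #(codewordsEqOn GolayCode R 1) := by ring
    _ = (24 + #R) * #(codewordsEqOn GolayCode R 1) := by rw [hcompl]

lemma sum_hammingNorm_sq_golayCode_through {R : Finset (Fin 24)} (hR : #R = 3) :
    ∑ c ∈ codewordsEqOn GolayCode R 1, hammingNorm c * hammingNorm c = 96000 := by
  have hmem (i : Fin 24) (hi : i ∈ R) :
      ∑ c ∈ codewordsEqOn GolayCode (insert i R) 1, hammingNorm c = 6912 := by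
    have hcount := card_codewordsEqOn_golayCode_mul (S := R) (by lia) 1
    have hsum := two_mul_sum_hammingNorm_golayCode_through (R := R) (by lia)
    rw [insert_eq_of_mem hi]
    rw [hR] at hcount hsum
    lia
  have hnotMem (i : Fin 24) (hi : i ∉ R) :
      ∑ c ∈ codewordsEqOn GolayCode (insert i R) 1, hammingNorm c = 3584 := by
    have hcard : #(insert i R) = 4 := by rw [card_insert_of_notMem hi, hR]
    have hcount := card_codewordsEqOn_golayCode_mul (S := insert i R) (by lia) 1
    have hsum := two_mul_sum_hammingNorm_golayCode_through (R := insert i R) (by lia)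
    rw [hcard] at hcount hsum
    lia
  rw [sum_mul_hammingNorm_codewordsEqOn_one, sum_eq_of_eqOn_of_eqOn_compl hmem hnotMem,
    card_compl, Fintype.card_fin, hR]

/-- The polynomial `(w - 12) (w - 16)` kills the weights `12` and `16`, so its sum over the words
through three points, known from the first two moments, isolates the octads. -/
lemma card_octads_through_three_points {R : Finset (Fin 24)} (hR : #R = 3) :
    #{c ∈ codewordsEqOn GolayCode R 1 | hammingNorm c = 8} = 21 := by
  have hcount := card_codewordsEqOn_golayCode_mul (S := R) (by lia) 1
  have hsum := two_mul_sum_hammingNorm_golayCode_through (R := R) (by lia)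
  have hsq := sum_hammingNorm_sq_golayCode_through hR
  have hpoly (c : Fin 24 → ZMod 2) (hc : c ∈ codewordsEqOn GolayCode R 1) :
      ((hammingNorm c : ℤ) * hammingNorm c) - 28 * hammingNorm c + 192 =
        32 * (if hammingNorm c = 8 then 1 else 0) + 96 * (if c = 1 then 1 else 0) := by
    obtain ⟨hcC, hcR⟩ := mem_codewordsEqOn.1 hc
    obtain rfl | hc1 := eq_or_ne c 1
    · simp [hammingNorm]
    · have hc0 : c ≠ 0 := by
        rintro rfl
        obtain ⟨i, hi⟩ : R.Nonempty := card_pos.1 (by lia)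
        exact zero_ne_one (hcR i hi)
      have hw := hammingNorm_mem_of_mem_golayCode hcC hc0 hc1
      simp only [mem_insert, mem_singleton] at hw
      rcases hw with hw | hw | hw <;> simp [hw, hc1]
  have htotal := sum_congr rfl hpoly
  have h1 : (1 : Fin 24 → ZMod 2) ∈ codewordsEqOn GolayCode R 1 := by
    rw [mem_codewordsEqOn]
    exact ⟨one_mem_golayCode, fun _ _ ↦ rfl⟩
  rw [sum_add_distrib, sum_add_distrib, sum_sub_distrib, ← mul_sum, ← mul_sum, ← mul_sum,
    sum_boole, sum_ite_eq', if_pos h1, sum_const, nsmul_eq_mul] at htotal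
  rw [hR] at hcount hsum
  zify at hcount hsum hsq
  lia

end GolayCode

section ParityOfSubsets

variable {α : Type*}

lemma two_mul_card_powerset_even_add {s : Finset α} (hs : s.Nonempty) (k : ℕ) :
    2 * #{M ∈ s.powerset | Even (k + #M)} = 2 ^ #s := by
  have hparity (M : Finset α) :
      2 * (if Even (k + #M) then 1 else 0) = 1 + (-1 : ℤ) ^ k * (-1) ^ #M := by
    rw [← pow_add]
    split_ifs with h
    · simp [h.neg_one_pow]
    · simp [(Nat.not_even_iff_odd.1 h).neg_one_pow]
  have hsum := sum_congr (rfl : s.powerset = _) fun M _ ↦ hparity M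
  rw [← mul_sum, sum_boole, sum_add_distrib, ← mul_sum,
    sum_powerset_neg_one_pow_card_of_nonempty hs] at hsum
  simp only [sum_const, card_powerset] at hsum
  zify
  simpa using hsum

lemma two_mul_card_powerset_inter_eq_even [DecidableEq α] {s t u : Finset α} (hut : u ⊆ t)
    (hts : t ⊂ s) :
    2 * #{N ∈ s.powerset | N ∩ t = u ∧ Even #N} = 2 ^ (#s - #t) := by
  rw [← card_sdiff_of_subset hts.subset,
    ← two_mul_card_powerset_even_add (sdiff_nonempty.2 hts.not_subset) #u]
  have hunion {M : Finset α} (hM : M ⊆ s \ t) : (u ∪ M) ∩ t = u ∧ (u ∪ M) \ t = M := by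
    grind
  congr 1
  refine card_nbij' (· \ t) (u ∪ ·) ?_ ?_ ?_ ?_
  · simp only [coe_filter, mem_powerset]
    rintro N ⟨hNs, rfl, hN⟩
    refine ⟨sdiff_subset_sdiff hNs le_rfl, ?_⟩
    rwa [card_inter_add_card_sdiff]
  · simp only [coe_filter, mem_powerset]
    rintro M ⟨hM, hcard⟩
    have hdisj : Disjoint u M := disjoint_of_subset_left hut (subset_sdiff.1 hM).2.symm
    refine ⟨union_subset (hut.trans hts.subset) (hM.trans sdiff_subset), (hunion hM).1, ?_⟩
    rwa [card_union_of_disjoint hdisj]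
  · simp only [coe_filter, mem_powerset]
    rintro N ⟨-, rfl, -⟩
    exact (union_comm _ _).trans (sdiff_union_inter N t)
  · simp only [coe_filter, mem_powerset]
    rintro M ⟨hM, -⟩
    exact (hunion hM).2

end ParityOfSubsets

section IntegerVector

variable {ι : Type*}

/-- The reduction modulo `2` of an integer vector. -/
def modTwo (y : ι → ℤ) : ι → ZMod 2 := fun i ↦ y i

lemma modTwo_eq_zero_iff {y : ι → ℤ} : modTwo y = 0 ↔ ∃ z, y = 2 * z := by
  simp only [modTwo, funext_iff, Pi.zero_apply, ZMod.intCast_zmod_eq_zero_iff_dvd]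
  exact ⟨fun h ↦ by choose z hz using h; exact ⟨z, hz⟩, fun ⟨z, hz⟩ i ↦ ⟨z i, hz i⟩⟩

lemma val_modTwo_le_sq (y : ι → ℤ) (i : ι) : ((modTwo y i).val : ℤ) ≤ y i ^ 2 := by
  rw [modTwo, ZMod.val_intCast, Nat.cast_ofNat]
  obtain h | h := Int.emod_two_eq_zero_or_one (y i)
  · rw [h]
    positivity
  · rw [h]
    have : y i ≠ 0 := by lia
    have : 0 < y i ^ 2 := by positivity
    lia

lemma modTwo_add_single_two [DecidableEq ι] (y : ι → ℤ) (k : ι) :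
    modTwo (y + Pi.single k 2) = modTwo y := by
  funext i
  obtain rfl | hi := eq_or_ne i k
  · simp [modTwo, CharTwo.two_eq_zero]
  · simp [modTwo, hi]

/-- The word `c` with entries `0, 1 ∈ ℤ`, negated on `N`. -/
def signedWord [DecidableEq ι] (c : ι → ZMod 2) (N : Finset ι) : ι → ℤ :=
  fun i ↦ if i ∈ N then -(c i).val else (c i).val

lemma modTwo_signedWord [DecidableEq ι] (c : ι → ZMod 2) (N : Finset ι) :
    modTwo (signedWord c N) = c := by
  funext i
  simp only [modTwo, signedWord]
  split_ifs <;> simp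

lemma signedWord_apply_neg_iff [DecidableEq ι] {c : ι → ZMod 2} {N : Finset ι}
    (hN : ∀ i ∈ N, c i ≠ 0) {i : ι} : signedWord c N i < 0 ↔ i ∈ N := by
  rw [signedWord]
  split_ifs with hi
  · have : 0 < (c i).val := ZMod.val_pos.2 (hN i hi)
    lia
  · lia

lemma eq_of_signedWord_eq [DecidableEq ι] {c : ι → ZMod 2} {N M : Finset ι}
    (hN : ∀ i ∈ N, c i ≠ 0) (hM : ∀ i ∈ M, c i ≠ 0) (h : signedWord c N = signedWord c M) :
    N = M := by
  ext i
  rw [← signedWord_apply_neg_iff hN, h, signedWord_apply_neg_iff hM]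

variable [Fintype ι]

lemma hammingNorm_modTwo_le_sum_sq (y : ι → ℤ) :
    (hammingNorm (modTwo y) : ℤ) ≤ ∑ i, y i ^ 2 := by
  rw [hammingNorm_eq_sum_val, Nat.cast_sum]
  exact sum_le_sum fun i _ ↦ val_modTwo_le_sq y i

lemma sq_eq_val_modTwo_of_sum_sq_eq {y : ι → ℤ} (h : ∑ i, y i ^ 2 = hammingNorm (modTwo y))
    (i : ι) : y i ^ 2 = (modTwo y i).val := by
  rw [hammingNorm_eq_sum_val, Nat.cast_sum] at h
  exact ((sum_eq_sum_iff_of_le fun i _ ↦ val_modTwo_le_sq y i).1 h.symm i (mem_univ i)).symm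

lemma sum_sq_eq_zero_iff {x : ι → ℤ} : ∑ i, x i ^ 2 = 0 ↔ x = 0 := by
  simp [sum_eq_zero_iff_of_nonneg, sq_nonneg, funext_iff]

lemma add_add_le_sum {f : ι → ℤ} {i j k : ι} (hij : i ≠ j) (hik : i ≠ k) (hjk : j ≠ k)
    (hf : ∀ l, 0 ≤ f l) : f i + f j + f k ≤ ∑ l, f l := by
  classical
  have h := sum_le_univ_sum_of_nonneg (s := {i, j, k}) hf
  rwa [sum_insert (by grind), sum_insert (by grind), sum_singleton, ← add_assoc] at h

variable [DecidableEq ι]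

lemma sum_add_single_sq (x : ι → ℤ) (k : ι) (s : ℤ) :
    ∑ i, (x + Pi.single k s : ι → ℤ) i ^ 2 = ∑ i, x i ^ 2 + 2 * s * x k + s ^ 2 := by
  have hsq (i : ι) : (x + Pi.single k s : ι → ℤ) i ^ 2 =
      x i ^ 2 + if i = k then 2 * s * x k + s ^ 2 else 0 := by
    rw [Pi.add_apply, Pi.single_apply]
    split_ifs with h
    · rw [h]
      ring
    · ring
  simp only [hsq, sum_add_distrib, sum_ite_eq', mem_univ, if_true]
  ring

lemma sum_single_sq (k : ι) (s : ℤ) : ∑ i, (Pi.single k s : ι → ℤ) i ^ 2 = s ^ 2 := by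
  simpa using sum_add_single_sq 0 k s

lemma sum_sq_eq_one_iff {x : ι → ℤ} :
    ∑ i, x i ^ 2 = 1 ↔ ∃ k s, (s = 1 ∨ s = -1) ∧ x = Pi.single k s := by
  simp only [← sq_eq_one_iff]
  constructor
  · intro h
    obtain ⟨k, -, hk⟩ : ∃ k ∈ univ, x k ^ 2 ≠ 0 := exists_ne_zero_of_sum_ne_zero (by lia)
    have hk_pos : 0 < x k ^ 2 := by positivity
    have hsum : ∑ i, (x + Pi.single k (-x k) : ι → ℤ) i ^ 2 = 1 - x k ^ 2 := by
      rw [sum_add_single_sq, h]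
      ring
    have hrest : ∑ i, (x + Pi.single k (-x k) : ι → ℤ) i ^ 2 = 0 := by
      have : 0 ≤ ∑ i, (x + Pi.single k (-x k) : ι → ℤ) i ^ 2 := sum_nonneg fun i _ ↦ sq_nonneg _
      lia
    refine ⟨k, x k, by lia, ?_⟩
    rwa [sum_sq_eq_zero_iff, Pi.single_neg, add_neg_eq_zero] at hrest
  · rintro ⟨k, s, hs, rfl⟩
    rw [sum_single_sq, hs]

lemma sum_sq_signedWord (c : ι → ZMod 2) (N : Finset ι) :
    ∑ i, signedWord c N i ^ 2 = hammingNorm c := by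
  have hval : ∀ a : ZMod 2, (a.val : ℤ) ^ 2 = a.val := by decide
  simp only [signedWord, ite_pow, neg_sq, ite_self, hval, hammingNorm_eq_sum_val, Nat.cast_sum]

lemma sum_signedWord {c : ι → ZMod 2} {N : Finset ι} (hN : ∀ i ∈ N, c i ≠ 0) :
    ∑ i, signedWord c N i = hammingNorm c - 2 * #N := by
  have hval : ∀ a : ZMod 2, a ≠ 0 → (a.val : ℤ) = 1 := by decide
  have hentry (i : ι) : signedWord c N i = (c i).val - 2 * (if i ∈ N then 1 else 0) := by
    rw [signedWord]
    split_ifs with hi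
    · rw [hval _ (hN i hi)]
      norm_num
    · ring
  simp only [hentry, sum_sub_distrib, ← mul_sum, sum_boole, filter_univ_mem,
    hammingNorm_eq_sum_val, Nat.cast_sum]

lemma eq_signedWord_of_sq_eq {y : ι → ℤ} (h : ∀ i, y i ^ 2 = (modTwo y i).val) :
    y = signedWord (modTwo y) {i | y i < 0} := by
  funext i
  have hval : ∀ a : ZMod 2, (a.val : ℤ) ^ 2 = a.val := by decide
  have hsq : y i ^ 2 = ((modTwo y i).val : ℤ) ^ 2 := (h i).trans (hval _).symm
  simp only [signedWord, mem_filter_univ]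
  rcases sq_eq_sq_iff_eq_or_eq_neg.1 hsq with hi | hi <;> split_ifs <;> lia

lemma eq_signedWord_empty_of_sum_sq_eq_sum {y : ι → ℤ} (h : ∑ i, y i ^ 2 = ∑ i, y i) :
    y = signedWord (modTwo y) ∅ := by
  funext i
  have hsq : y i ^ 2 = y i := ((sum_eq_sum_iff_of_le fun i _ ↦ Int.le_self_sq (y i)).1 h.symm i
    (mem_univ i)).symm
  rcases eq_zero_or_one_of_sq_eq_self hsq with hi | hi <;>
    simp [signedWord, modTwo, hi, ZMod.val_one]

end IntegerVector

section LeechLattice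

lemma ite_four_dvd_two_mul_sub_two (a : ℤ) :
    (if 4 ∣ 2 * a - 2 then 1 else 0 : ZMod 2) = a := by
  obtain ⟨b, rfl | rfl⟩ := Int.even_or_odd' a
  · rw [if_neg (by lia)]
    simp [CharTwo.two_eq_zero]
  · rw [if_pos (by lia)]
    simp [CharTwo.two_eq_zero]

lemma isLeech_two_mul_iff {y : Fin 24 → ℤ} :
    IsLeech (2 * y) ↔ modTwo y ∈ GolayCode ∧ 4 ∣ ∑ i, y i := by
  have hword : (fun i ↦ if (4 : ℤ) ∣ (2 * y) i - 0 - 2 then (1 : ZMod 2) else 0) = modTwo y := by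
    funext i
    simp [modTwo, ← ite_four_dvd_two_mul_sub_two]
  have hsum : ∑ i, (2 * y) i = 2 * ∑ i, y i := by simp [mul_sum]
  constructor
  · rintro ⟨m, rfl | rfl, heven, hgolay, hdvd⟩
    · exact ⟨hword ▸ hgolay, by lia⟩
    · have := heven 0
      simp only [Pi.mul_apply, Pi.ofNat_apply] at this
      lia
  · rintro ⟨hgolay, hdvd⟩
    refine ⟨0, .inl rfl, fun i ↦ ?_, hword ▸ hgolay, by lia⟩
    simp

lemma isLeech_one_sub_two_mul_iff {y : Fin 24 → ℤ} :
    IsLeech (1 - 2 * y) ↔ modTwo y ∈ GolayCode ∧ 4 ∣ ∑ i, y i + 2 := by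
  have hword : (fun i ↦ if (4 : ℤ) ∣ (1 - 2 * y) i - 1 - 2 then (1 : ZMod 2) else 0) =
      modTwo y := by
    funext i
    have hdvd : (4 : ℤ) ∣ (1 - 2 * y) i - 1 - 2 ↔ 4 ∣ 2 * y i - 2 := by
      simp only [Pi.sub_apply, Pi.mul_apply, Pi.ofNat_apply]
      lia
    simp only [hdvd, modTwo, ite_four_dvd_two_mul_sub_two]
  have hsum : ∑ i, (1 - 2 * y) i = 24 - 2 * ∑ i, y i := by simp [mul_sum, sum_sub_distrib]
  constructor
  · rintro ⟨m, rfl | rfl, hodd, hgolay, hdvd⟩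
    · have := hodd 0
      simp only [Pi.sub_apply, Pi.mul_apply, Pi.ofNat_apply] at this
      lia
    · exact ⟨hword ▸ hgolay, by lia⟩
  · rintro ⟨hgolay, hdvd⟩
    refine ⟨1, .inr rfl, fun i ↦ ?_, hword ▸ hgolay, by lia⟩
    simp

lemma exists_eq_two_mul_or_of_isLeech {x : Fin 24 → ℤ} (hx : IsLeech x) :
    ∃ y, x = 2 * y ∨ x = 1 - 2 * y := by
  obtain ⟨m, rfl | rfl, hdvd, -⟩ := hx
  · choose y hy using hdvd
    refine ⟨y, .inl (funext fun i ↦ ?_)⟩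
    simpa using hy i
  · choose y hy using hdvd
    refine ⟨-y, .inr (funext fun i ↦ ?_)⟩
    simp only [Pi.sub_apply, Pi.mul_apply, Pi.neg_apply, Pi.ofNat_apply]
    linarith [hy i]

lemma leechInner_self_eq_four_iff {x : Fin 24 → ℤ} : leechInner x x = 4 ↔ ∑ i, x i ^ 2 = 32 := by
  have hcast : leechInner x x = (∑ i, x i ^ 2 : ℤ) / 8 := by
    simp [leechInner, sq]
  rw [hcast, div_eq_iff (by norm_num)]
  norm_cast

lemma sub_vA (T : Fin 24 → ℤ) : T - vA = T + Pi.single 21 (-4) + Pi.single 23 4 := by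
  rw [show vA = -Pi.single 21 (-4) - Pi.single 23 4 by decide]
  abel

lemma sub_vB (T : Fin 24 → ℤ) : T - vB = T + Pi.single 22 (-4) + Pi.single 23 4 := by
  rw [show vB = -Pi.single 22 (-4) - Pi.single 23 4 by decide]
  abel

lemma mem_TAB_iff {T : Fin 24 → ℤ} :
    T ∈ TAB ↔ IsLeech T ∧ ∑ i, T i ^ 2 = 32 ∧ T 21 = T 23 + 4 ∧ T 22 = T 23 + 4 := by
  have hA : ∑ i, (T - vA) i ^ 2 = ∑ i, T i ^ 2 - 8 * T 21 + 8 * T 23 + 32 := by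
    rw [sub_vA, sum_add_single_sq, sum_add_single_sq, Pi.add_apply, Pi.single_eq_of_ne (by decide)]
    ring
  have hB : ∑ i, (T - vB) i ^ 2 = ∑ i, T i ^ 2 - 8 * T 22 + 8 * T 23 + 32 := by
    rw [sub_vB, sum_add_single_sq, sum_add_single_sq, Pi.add_apply, Pi.single_eq_of_ne (by decide)]
    ring
  simp only [TAB, Set.mem_ofPred_eq, leechInner_self_eq_four_iff, hA, hB]
  lia

lemma two_mul_mem_TAB_iff {y : Fin 24 → ℤ} :
    2 * y ∈ TAB ↔ modTwo y ∈ GolayCode ∧ 4 ∣ ∑ i, y i ∧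
      ∑ i, y i ^ 2 = 8 ∧ y 21 = y 23 + 2 ∧ y 22 = y 23 + 2 := by
  have hsq : ∑ i, (2 * y) i ^ 2 = 4 * ∑ i, y i ^ 2 := by simp [mul_pow, mul_sum]
  rw [mem_TAB_iff, isLeech_two_mul_iff, hsq]
  simp only [Pi.mul_apply, Pi.ofNat_apply, and_assoc]
  lia

lemma two_mul_two_mul_mem_TAB_iff {z : Fin 24 → ℤ} :
    2 * (2 * z) ∈ TAB ↔ ∑ i, z i ^ 2 = 2 ∧ z 21 = z 23 + 1 ∧ z 22 = z 23 + 1 := by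
  have hsq : ∑ i, (2 * z) i ^ 2 = 4 * ∑ i, z i ^ 2 := by simp [mul_pow, mul_sum]
  have hsum : ∑ i, (2 * z) i = 2 * ∑ i, z i := by simp [mul_sum]
  have hparity : 2 ∣ ∑ i, z i ^ 2 - ∑ i, z i := by
    rw [← sum_sub_distrib]
    refine dvd_sum fun i _ ↦ ?_
    rw [sq, ← mul_sub_one]
    exact (Int.even_mul_pred_self (z i)).two_dvd
  rw [two_mul_mem_TAB_iff, hsq, hsum, modTwo_eq_zero_iff.2 ⟨z, rfl⟩]
  simp only [zero_mem, true_and, Pi.mul_apply, Pi.ofNat_apply]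
  lia

lemma one_sub_two_mul_mem_TAB_iff {y : Fin 24 → ℤ} :
    1 - 2 * y ∈ TAB ↔ modTwo y ∈ GolayCode ∧ 4 ∣ ∑ i, y i + 2 ∧
      ∑ i, y i ^ 2 = ∑ i, y i + 2 ∧ y 21 = y 23 - 2 ∧ y 22 = y 23 - 2 := by
  have hentry (i : Fin 24) : (1 - 2 * y) i ^ 2 = 1 - 4 * y i + 4 * y i ^ 2 := by
    simp only [Pi.sub_apply, Pi.mul_apply, Pi.ofNat_apply]
    ring
  have hsq : ∑ i, (1 - 2 * y) i ^ 2 = 24 - 4 * ∑ i, y i + 4 * ∑ i, y i ^ 2 := by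
    simp only [hentry, sum_add_distrib, sum_sub_distrib, ← mul_sum, sum_const, card_univ,
      Fintype.card_fin]
    rfl
  rw [mem_TAB_iff, isLeech_one_sub_two_mul_iff, hsq]
  simp only [Pi.sub_apply, Pi.mul_apply, Pi.ofNat_apply, and_assoc]
  lia

end LeechLattice

section Counting

lemma two_mul_two_mul_mem_TAB_iff_of_eq_zero {z : Fin 24 → ℤ} (h23 : z 23 = 0) :
    2 * (2 * z) ∈ TAB ↔ z = Pi.single 21 1 + Pi.single 22 1 := by
  rw [two_mul_two_mul_mem_TAB_iff]
  constructor
  · rintro ⟨hsq, h21, h22⟩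
    have hrest : ∑ i, (z + Pi.single 21 (-1) + Pi.single 22 (-1) : Fin 24 → ℤ) i ^ 2 = 0 := by
      rw [sum_add_single_sq, sum_add_single_sq, Pi.add_apply, Pi.single_eq_of_ne (by decide)]
      lia
    rw [sum_sq_eq_zero_iff, Pi.single_neg, Pi.single_neg] at hrest
    rw [← sub_eq_zero, ← hrest]
    abel
  · rintro rfl
    rw [sum_add_single_sq, sum_single_sq]
    decide

lemma two_mul_two_mul_mem_TAB_iff_of_eq_neg_one {z : Fin 24 → ℤ} (h23 : z 23 = -1) :
    2 * (2 * z) ∈ TAB ↔ ∃ k ∉ ({21, 22, 23} : Finset (Fin 24)), ∃ s, (s = 1 ∨ s = -1) ∧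
      Pi.single k s + Pi.single 23 (-1) = z := by
  rw [two_mul_two_mul_mem_TAB_iff]
  constructor
  · rintro ⟨hsq, h21, h22⟩
    have hrest : ∑ i, (z + Pi.single 23 1 : Fin 24 → ℤ) i ^ 2 = 1 := by
      rw [sum_add_single_sq]
      lia
    obtain ⟨k, s, hs, hz⟩ := sum_sq_eq_one_iff.1 hrest
    refine ⟨k, fun hk ↦ ?_, s, hs, by rw [← hz, Pi.single_neg, add_neg_cancel_right]⟩
    have hzero : (z + Pi.single 23 1 : Fin 24 → ℤ) k = 0 := by
      simp only [mem_insert, mem_singleton] at hk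
      rcases hk with rfl | rfl | rfl <;> simp [h21, h22, h23]
    rw [hz, Pi.single_eq_same] at hzero
    lia
  · rintro ⟨k, hk, s, hs, rfl⟩
    have hsingle {i : Fin 24} (hi : i ∈ ({21, 22, 23} : Finset (Fin 24))) :
        (Pi.single k s : Fin 24 → ℤ) i = 0 := by
      rw [Pi.single_eq_of_ne (ne_of_mem_of_not_mem hi hk)]
    rw [sum_add_single_sq, sum_single_sq, sq_eq_one_iff.2 hs, hsingle (by decide)]
    simp [hsingle]

lemma two_mul_two_mul_mem_TAB_iff_exists {z : Fin 24 → ℤ} :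
    2 * (2 * z) ∈ TAB ↔ z = Pi.single 21 1 + Pi.single 22 1 ∨
      ∃ k ∉ ({21, 22, 23} : Finset (Fin 24)), ∃ s, (s = 1 ∨ s = -1) ∧
        Pi.single k s + Pi.single 23 (-1) = z := by
  constructor
  · intro hz
    obtain h23 | h23 : z 23 = 0 ∨ z 23 = -1 := by
      obtain ⟨hsq, h21, h22⟩ := two_mul_two_mul_mem_TAB_iff.1 hz
      have hle := add_add_le_sum (i := 21) (j := 22) (k := 23) (by decide) (by decide) (by decide)
        fun i ↦ sq_nonneg (z i)
      rw [hsq, h21, h22] at hle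
      have : z 23 < 1 := by nlinarith
      have : -2 < z 23 := by nlinarith
      lia
    · exact .inl ((two_mul_two_mul_mem_TAB_iff_of_eq_zero h23).1 hz)
    · exact .inr ((two_mul_two_mul_mem_TAB_iff_of_eq_neg_one h23).1 hz)
  · rintro (rfl | h)
    · exact (two_mul_two_mul_mem_TAB_iff_of_eq_zero (by decide)).2 rfl
    · refine (two_mul_two_mul_mem_TAB_iff_of_eq_neg_one ?_).2 h
      obtain ⟨k, hk, s, -, rfl⟩ := h
      rw [Pi.add_apply, Pi.single_eq_same, Pi.single_eq_of_ne (by grind), zero_add]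

lemma encard_two_mul_two_mul_mem_TAB : {z | 2 * (2 * z) ∈ TAB}.encard = 43 := by
  set P : Finset (Fin 24 × ℤ) := ({21, 22, 23} : Finset (Fin 24))ᶜ ×ˢ {1, -1} with hP
  set f : Fin 24 × ℤ → Fin 24 → ℤ := fun p ↦ Pi.single p.1 p.2 + Pi.single 23 (-1)
  have hset : {z | 2 * (2 * z) ∈ TAB} =
      ↑(insert (Pi.single 21 1 + Pi.single 22 1) (P.image f)) := by
    ext z
    rw [Set.mem_ofPred_eq, two_mul_two_mul_mem_TAB_iff_exists, mem_coe, mem_insert, mem_image]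
    simp only [hP, f, Prod.exists, mem_product, mem_compl, mem_insert, mem_singleton, and_assoc,
      exists_and_left]
  have hinj : Set.InjOn f P := by
    rintro ⟨k, s⟩ hks ⟨l, t⟩ - h
    replace h : (Pi.single k s : Fin 24 → ℤ) = Pi.single l t := add_right_cancel h
    have hs : s ≠ 0 := by
      rintro rfl
      simp [hP] at hks
    obtain rfl : k = l := by
      by_contra hkl
      have := congr_fun h k
      rw [Pi.single_eq_same, Pi.single_eq_of_ne hkl] at this
      exact hs this
    rw [Pi.single_injective _ h]
  have hnotMem : Pi.single 21 1 + Pi.single 22 1 ∉ P.image f := by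
    intro h
    obtain ⟨⟨k, s⟩, hks, h⟩ := mem_image.1 h
    replace h := congr_fun h 21
    have hk : 21 ≠ k := by
      rintro rfl
      simp [hP] at hks
    simp [f, Pi.single_eq_of_ne hk] at h
  rw [hset, Set.encard_coe_eq_coe_finsetCard, card_insert_of_notMem hnotMem,
    card_image_of_injOn hinj]
  rfl

lemma last_coordinates_of_one_sub_two_mul_mem_TAB {y : Fin 24 → ℤ} (hy : 1 - 2 * y ∈ TAB) :
    y 21 = 0 ∧ y 22 = 0 ∧ y 23 = 2 := by
  obtain ⟨-, -, hsq, h21, h22⟩ := one_sub_two_mul_mem_TAB_iff.1 hy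
  have hle := add_add_le_sum (i := 21) (j := 22) (k := 23) (by decide) (by decide) (by decide)
    fun i ↦ sub_nonneg.2 (Int.le_self_sq (y i))
  rw [sum_sub_distrib, hsq, h21, h22] at hle
  have : 1 < y 23 := by nlinarith
  have : y 23 < 3 := by nlinarith
  lia

lemma exists_codeword_of_one_sub_two_mul_mem_TAB {y : Fin 24 → ℤ} (hy : 1 - 2 * y ∈ TAB) :
    ∃ c ∈ codewordsEqOn GolayCode {21, 22, 23} 0, signedWord c ∅ + Pi.single 23 2 = y := by
  obtain ⟨h21, h22, h23⟩ := last_coordinates_of_one_sub_two_mul_mem_TAB hy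
  obtain ⟨hgolay, -, hsq, -⟩ := one_sub_two_mul_mem_TAB_iff.1 hy
  have hx : y + Pi.single 23 (-2) = signedWord (modTwo y) ∅ := by
    have hmod : modTwo (y + Pi.single 23 (-2)) = modTwo y := by
      rw [← modTwo_add_single_two _ 23, Pi.single_neg, neg_add_cancel_right]
    rw [← hmod]
    refine eq_signedWord_empty_of_sum_sq_eq_sum ?_
    rw [sum_add_single_sq, hsq, h23]
    simp only [Pi.add_apply, sum_add_distrib, sum_pi_single', mem_univ, if_true]
    ring
  refine ⟨modTwo y, ?_, by rw [← hx, Pi.single_neg, neg_add_cancel_right]⟩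
  rw [mem_codewordsEqOn]
  refine ⟨hgolay, ?_⟩
  simp [modTwo, h21, h22, h23, CharTwo.two_eq_zero]

lemma one_sub_two_mul_signedWord_mem_TAB {c : Fin 24 → ZMod 2}
    (hc : c ∈ codewordsEqOn GolayCode {21, 22, 23} 0) :
    1 - 2 * (signedWord c ∅ + Pi.single 23 2) ∈ TAB := by
  obtain ⟨hcC, hc0⟩ := mem_codewordsEqOn.1 hc
  have h4 := four_dvd_hammingNorm_of_mem_golayCode hcC
  have hsum : ∑ i, (signedWord c ∅ + Pi.single 23 2 : Fin 24 → ℤ) i = hammingNorm c + 2 := by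
    simp [sum_add_distrib, sum_signedWord]
  have hzero {i : Fin 24} (hi : i ∈ ({21, 22, 23} : Finset (Fin 24))) :
      signedWord c ∅ i = 0 := by
    simp [signedWord, hc0 i hi]
  rw [one_sub_two_mul_mem_TAB_iff, modTwo_add_single_two, modTwo_signedWord, hsum,
    sum_add_single_sq, sum_sq_signedWord, hzero (by decide)]
  refine ⟨hcC, by lia, by lia, ?_, ?_⟩ <;> simp [hzero]

lemma encard_one_sub_two_mul_mem_TAB : {y | 1 - 2 * y ∈ TAB}.encard = 512 := by
  have hset : {y | 1 - 2 * y ∈ TAB} =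
      (signedWord · ∅ + Pi.single 23 2) '' codewordsEqOn GolayCode {21, 22, 23} 0 := by
    ext y
    refine ⟨exists_codeword_of_one_sub_two_mul_mem_TAB, ?_⟩
    rintro ⟨c, hc, rfl⟩
    exact one_sub_two_mul_signedWord_mem_TAB hc
  have hinj : Function.Injective fun c : Fin 24 → ZMod 2 ↦ signedWord c ∅ + Pi.single 23 2 :=
    Function.LeftInverse.injective (g := modTwo) fun c ↦ by
      rw [modTwo_add_single_two, modTwo_signedWord]
  have hcard : #(codewordsEqOn GolayCode {21, 22, 23} 0) = 512 := by
    have h := card_codewordsEqOn_golayCode_mul (S := {21, 22, 23}) (by decide) 0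
    rw [show #({21, 22, 23} : Finset (Fin 24)) = 3 from rfl] at h
    lia
  rw [hset, hinj.encard_image, Set.encard_coe_eq_coe_finsetCard, hcard]
  rfl

/-- The pairs `(c, N)` of an octad `c` through the last three points and a set `N` of signs that
make `signedWord c N` end in `1, 1, -1` and have coordinate sum divisible by four. -/
noncomputable def signedOctads : Finset (Σ _ : Fin 24 → ZMod 2, Finset (Fin 24)) :=
  {c ∈ codewordsEqOn GolayCode {21, 22, 23} 1 | hammingNorm c = 8}.sigma fun c ↦
    {N ∈ (univ.filter (c · ≠ 0)).powerset | N ∩ {21, 22, 23} = {23} ∧ Even #N}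

lemma card_powerset_inter_eq_even_of_octad {c : Fin 24 → ZMod 2}
    (hc : ∀ i ∈ ({21, 22, 23} : Finset (Fin 24)), c i = 1) (hw : hammingNorm c = 8) :
    #{N ∈ (univ.filter (c · ≠ 0)).powerset | N ∩ {21, 22, 23} = {23} ∧ Even #N} = 16 := by
  have hcard : #(univ.filter (c · ≠ 0)) = 8 := hw
  have hsub : {21, 22, 23} ⊆ univ.filter (c · ≠ 0) := fun i hi ↦ by
    rw [mem_filter_univ, hc i hi]
    exact one_ne_zero
  have hssub : {21, 22, 23} ⊂ univ.filter (c · ≠ 0) := by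
    refine hsub.ssubset_of_ne fun h ↦ ?_
    rw [← h] at hcard
    revert hcard
    decide
  have h := two_mul_card_powerset_inter_eq_even (u := {23}) (by decide) hssub
  rw [hcard, show #({21, 22, 23} : Finset (Fin 24)) = 3 from rfl] at h
  lia

lemma card_signedOctads : #signedOctads = 336 := by
  rw [signedOctads, card_sigma, sum_const_nat (m := 16), card_octads_through_three_points rfl]
  intro c hc
  rw [mem_filter, mem_codewordsEqOn] at hc
  exact card_powerset_inter_eq_even_of_octad hc.1.2 hc.2

lemma mem_signedOctads {c : Fin 24 → ZMod 2} {N : Finset (Fin 24)} :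
    ⟨c, N⟩ ∈ signedOctads ↔ (c ∈ codewordsEqOn GolayCode {21, 22, 23} 1 ∧ hammingNorm c = 8) ∧
      (∀ i ∈ N, c i ≠ 0) ∧ N ∩ {21, 22, 23} = {23} ∧ Even #N := by
  simp only [signedOctads, mem_sigma, mem_filter, mem_powerset, subset_iff, mem_univ, true_and]

lemma injOn_signedWord_signedOctads :
    Set.InjOn (fun p : Σ _ : Fin 24 → ZMod 2, Finset (Fin 24) ↦ signedWord p.1 p.2)
      signedOctads := by
  rintro ⟨c, N⟩ hN ⟨d, M⟩ hM h
  obtain ⟨-, hcN, -⟩ := mem_signedOctads.1 hN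
  obtain ⟨-, hdM, -⟩ := mem_signedOctads.1 hM
  obtain rfl : c = d := by
    rw [← modTwo_signedWord c N, ← modTwo_signedWord d M]
    exact congr_arg modTwo h
  rw [eq_of_signedWord_eq hcN hdM h]

lemma sq_eq_val_modTwo_of_two_mul_mem_TAB {y : Fin 24 → ℤ} (hy : 2 * y ∈ TAB)
    (hy0 : modTwo y ≠ 0) :
    hammingNorm (modTwo y) = 8 ∧ ∀ i, y i ^ 2 = (modTwo y i).val := by
  obtain ⟨hgolay, -, hsq, -⟩ := two_mul_mem_TAB_iff.1 hy
  have hw : hammingNorm (modTwo y) = 8 := by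
    have := eight_le_hammingNorm_of_mem_golayCode hgolay hy0
    have := hammingNorm_modTwo_le_sum_sq y
    lia
  exact ⟨hw, sq_eq_val_modTwo_of_sum_sq_eq (by lia)⟩

lemma exists_signedOctad_of_two_mul_mem_TAB {y : Fin 24 → ℤ} (hy : 2 * y ∈ TAB)
    (hy0 : modTwo y ≠ 0) : ∃ p ∈ signedOctads, signedWord p.1 p.2 = y := by
  obtain ⟨hgolay, hsum, -, h21, h22⟩ := two_mul_mem_TAB_iff.1 hy
  obtain ⟨hw, hval⟩ := sq_eq_val_modTwo_of_two_mul_mem_TAB hy hy0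
  have hsigned := eq_signedWord_of_sq_eq hval
  have hneg : ∀ i ∈ univ.filter (y · < 0), modTwo y i ≠ 0 := by
    intro i hi hi0
    have hzero : y i = 0 := by simpa [hi0] using hval i
    rw [mem_filter_univ, hzero] at hi
    exact lt_irrefl 0 hi
  have h23 : y 23 = -1 := by
    have hle (i : Fin 24) : |y i| ≤ 1 := by
      rw [← sq_le_one_iff_abs_le_one, hval i]
      have := ZMod.val_lt (modTwo y i)
      lia
    have := abs_le.1 (hle 21)
    have := abs_le.1 (hle 23)
    lia
  refine ⟨⟨modTwo y, univ.filter (y · < 0)⟩, ?_, hsigned.symm⟩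
  rw [mem_signedOctads, mem_codewordsEqOn]
  refine ⟨⟨⟨hgolay, ?_⟩, hw⟩, hneg, ?_, ?_⟩
  · simp [modTwo, h21, h22, h23, CharTwo.neg_eq]
  · ext i
    simp only [mem_inter, mem_filter_univ, mem_insert, mem_singleton]
    constructor
    · rintro ⟨hi, rfl | rfl | rfl⟩ <;> lia
    · rintro rfl
      simp [h23]
  · rw [hsigned, sum_signedWord hneg, hw] at hsum
    rw [even_iff_two_dvd]
    lia

lemma two_mul_signedWord_mem_TAB {c : Fin 24 → ZMod 2} {N : Finset (Fin 24)}
    (hcN : ⟨c, N⟩ ∈ signedOctads) : 2 * signedWord c N ∈ TAB := by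
  rw [mem_signedOctads, mem_codewordsEqOn] at hcN
  obtain ⟨⟨⟨hcC, hc1⟩, hw⟩, hN, hN23, heven⟩ := hcN
  have hmem {i : Fin 24} (hi : i ∈ ({21, 22, 23} : Finset (Fin 24))) : i ∈ N ↔ i = 23 := by
    rw [← mem_singleton, ← hN23, mem_inter, and_iff_left hi]
  rw [even_iff_two_dvd] at heven
  rw [two_mul_mem_TAB_iff, modTwo_signedWord, sum_signedWord hN, sum_sq_signedWord, hw]
  refine ⟨hcC, by lia, rfl, ?_, ?_⟩ <;> simp [signedWord, hmem, hc1, ZMod.val_one]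

lemma encard_two_mul_mem_TAB_modTwo_ne_zero : {y | 2 * y ∈ TAB ∧ modTwo y ≠ 0}.encard = 336 := by
  have hset : {y | 2 * y ∈ TAB ∧ modTwo y ≠ 0} =
      (fun p : Σ _, _ ↦ signedWord p.1 p.2) '' signedOctads := by
    ext y
    refine ⟨fun hy ↦ exists_signedOctad_of_two_mul_mem_TAB hy.1 hy.2, ?_⟩
    rintro ⟨⟨c, N⟩, hcN, rfl⟩
    refine ⟨two_mul_signedWord_mem_TAB hcN, ?_⟩
    rw [modTwo_signedWord, ← hammingNorm_ne_zero_iff, (mem_signedOctads.1 hcN).1.2]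
    norm_num
  rw [hset, injOn_signedWord_signedOctads.encard_image, Set.encard_coe_eq_coe_finsetCard,
    card_signedOctads]
  rfl

lemma TAB_eq_union : TAB = (fun z ↦ 2 * (2 * z)) '' {z | 2 * (2 * z) ∈ TAB} ∪
    (fun y ↦ 2 * y) '' {y | 2 * y ∈ TAB ∧ modTwo y ≠ 0} ∪
    (fun y ↦ 1 - 2 * y) '' {y | 1 - 2 * y ∈ TAB} := by
  ext T
  constructor
  · intro hT
    obtain ⟨y, rfl | rfl⟩ := exists_eq_two_mul_or_of_isLeech hT.1
    · by_cases hy : modTwo y = 0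
      · obtain ⟨z, rfl⟩ := modTwo_eq_zero_iff.1 hy
        exact .inl (.inl ⟨z, hT, rfl⟩)
      · exact .inl (.inr ⟨y, ⟨hT, hy⟩, rfl⟩)
    · exact .inr ⟨y, hT, rfl⟩
  · rintro ((⟨z, hz, rfl⟩ | ⟨y, hy, rfl⟩) | ⟨y, hy, rfl⟩)
    exacts [hz, hy.1, hy]

lemma encard_TAB_eq_add : TAB.encard = {z | 2 * (2 * z) ∈ TAB}.encard +
    {y | 2 * y ∈ TAB ∧ modTwo y ≠ 0}.encard + {y | 1 - 2 * y ∈ TAB}.encard := by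
  have hinj : Function.Injective fun y : Fin 24 → ℤ ↦ 2 * y := fun x y h ↦ funext fun i ↦
    mul_left_cancel₀ two_ne_zero (congr_fun h i)
  have hinj_even : Function.Injective fun z : Fin 24 → ℤ ↦ 2 * (2 * z) := hinj.comp hinj
  have hinj_odd : Function.Injective fun y : Fin 24 → ℤ ↦ 1 - 2 * y :=
    sub_right_injective.comp hinj
  have hparity (x y : Fin 24 → ℤ) : 2 * x ≠ 1 - 2 * y := fun h ↦ by
    have := congr_fun h 0
    simp only [Pi.sub_apply, Pi.mul_apply, Pi.ofNat_apply] at this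
    lia
  conv_lhs => rw [TAB_eq_union]
  rw [Set.encard_union_eq, Set.encard_union_eq, hinj_even.encard_image, hinj.encard_image,
    hinj_odd.encard_image]
  · rw [Set.disjoint_left]
    rintro _ ⟨z, -, rfl⟩ ⟨y, ⟨-, hy⟩, h⟩
    exact hy (modTwo_eq_zero_iff.2 ⟨z, hinj h⟩)
  · rw [Set.disjoint_left]
    rintro _ (⟨z, -, rfl⟩ | ⟨x, -, rfl⟩) ⟨y, -, h⟩
    exacts [hparity _ y h.symm, hparity x y h.symm]

end Counting

/-- `T_AB` has exactly 891 elements. -/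
theorem card_TAB : Nat.card ↥TAB = 891 := by
  rw [Nat.card_coe_set_eq, Set.ncard, encard_TAB_eq_add, encard_two_mul_two_mul_mem_TAB,
    encard_two_mul_mem_TAB_modTwo_ne_zero, encard_one_sub_two_mul_mem_TAB]
  rfl
end
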